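/- arXiv:2604.20525 — 2 statements merged into one kernel-verified Lean document; each statement's English description precedes it below -/
import Mathlib

section
/- Let a₀ ∈ C_c^∞(ℝ²) be real-valued with supp a₀ ⊂ (−1/2, 1/2)², and for j = (j₁, j₂) ∈ ℤ² let a_j(x,y) := a₀(x − j₁, y − j₂). Then for every N > 0 there exists a constant C_N > 0, depending only on a₀ and N, such that for all h ∈ (0,1) and all i ≠ j in ℤ², the operator norm of the composition satisfies ‖â_i ∘ â_j‖ ≤ C_N h^N |i − j|^{−N}. -/
/-!
STATEMENT 2: Let a₀ ∈ C_c^∞(ℝ²) be real-valued with supp a₀ ⊂ (−1/2,1/2)²,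
and for j ∈ ℤ² let a_j be the translate of a₀ by j.  Then for every N > 0
there is C_N > 0, depending only on a₀ and N, such that for all h ∈ (0,1) and
all i ≠ j in ℤ², ‖â_i ∘ â_j‖ ≤ C_N h^N |i−j|^{−N} (operator norm on L²(ℝ)).
-/

open MeasureTheory Complex Real

noncomputable section

/-- The Hilbert space `L²(ℝ)` of complex-valued square-integrable functions. -/
abbrev L2R := MeasureTheory.Lp ℂ 2 (MeasureTheory.volume : MeasureTheory.Measure ℝ)

/-- The semiclassical Weyl kernel of a symbol `a : ℝ² → ℝ` at parameter `h`. -/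
def weylKernel (h : ℝ) (a : ℝ × ℝ → ℝ) (y y' : ℝ) : ℂ :=
  ((1 / (2 * Real.pi * h) : ℝ) : ℂ) *
    ∫ η : ℝ, Complex.exp (Complex.I * (((y - y') * η / h : ℝ) : ℂ)) *
      ((a ((y + y') / 2, η) : ℝ) : ℂ)

/-- `T` is the semiclassical Weyl quantization of the symbol `a` at parameter `h`. -/
def IsWeylQuant (h : ℝ) (a : ℝ × ℝ → ℝ) (T : L2R →L[ℂ] L2R) : Prop :=
  ∀ u : L2R, (T u : ℝ → ℂ) =ᵐ[volume]
    fun y => ∫ y' : ℝ, weylKernel h a y y' * (u : ℝ → ℂ) y'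

/-- The translate of a symbol by a lattice point `j ∈ ℤ²`. -/
def shiftSymbol (a : ℝ × ℝ → ℝ) (j : ℤ × ℤ) : ℝ × ℝ → ℝ :=
  fun p => a (p.1 - (j.1 : ℝ), p.2 - (j.2 : ℝ))

/-- Euclidean length of a lattice vector in `ℤ²`. -/
def latticeNorm (j : ℤ × ℤ) : ℝ :=
  Real.sqrt ((j.1 : ℝ) ^ 2 + (j.2 : ℝ) ^ 2)

/-!
The composition has the integral kernel `∫ K_{a_i}(y, z) K_{b_j}(z, s) dz`, whose support lies in a
band around a translated diagonal, of width bounded independently of `i`, `j` and `h`. By the Schur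
test its operator norm is controlled by the supremum of this kernel.

The supremum is estimated by non-stationary phase, separately in each lattice direction. Integrating
by parts in the momenta `η`, `ξ` gains powers of `|y - z| / h` and `|z - s| / h`, hence of
`|y - s| / h`, and `(y - s) / 2` lies within `r + r'` of `i₁ - j₁` on the support of the kernel,
where `r`, `r'` are the radii of the supports of the symbols. Integrating by parts in the position
`z` instead, where the phase is `z (ξ - η) / h`, gains powers of `|ξ - η| / h`, and `η - ξ` lies
within `r + r'` of `i₂ - j₂`. A number within `r + r' < 1` of an integer `n` has absolute value at
least `(1 - (r + r')) |n|`, so the two gains are powers of `|i₁ - j₁| / h` and `|i₂ - j₂| / h`.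

The two prefactors `1 / (2πh)` cost a factor `h⁻²`, which two additional powers of `|i - j| / h`
absorb since `|i - j| ≥ 1`.
-/

open Function Metric
open scoped ENNReal NNReal FourierTransform

section SchurTest

variable {α β : Type*} [MeasurableSpace α] [MeasurableSpace β] {μ : Measure α} {ν : Measure β}

lemma sq_lintegral_mul_le_lintegral_mul_lintegral_mul_sq {k f : β → ℝ≥0∞}
    (hk : AEMeasurable k ν) (hf : AEMeasurable f ν) :
    (∫⁻ y, k y * f y ∂ν) ^ 2 ≤ (∫⁻ y, k y ∂ν) * ∫⁻ y, k y * f y ^ 2 ∂ν := by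
  have holder := ENNReal.lintegral_mul_norm_pow_le hk (hk.mul (hf.pow_const 2))
    (p := 1 / 2) (q := 1 / 2) (by norm_num) (by norm_num) (by norm_num)
  have sqrt_mul_sqrt (a b : ℝ≥0∞) : a ^ (1 / 2 : ℝ) * (a * b ^ 2) ^ (1 / 2 : ℝ) = a * b := by
    rw [← ENNReal.mul_rpow_of_nonneg _ _ (by norm_num), ← mul_assoc, ← sq, ← mul_pow,
      ← ENNReal.rpow_natCast_mul]
    norm_num
  simp only [Pi.mul_apply, sqrt_mul_sqrt] at holder
  refine (pow_le_pow_left' holder 2).trans_eq ?_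
  rw [← ENNReal.mul_rpow_of_nonneg _ _ (by norm_num), ← ENNReal.rpow_mul_natCast]
  norm_num

lemma lintegral_sq_lintegral_mul_le [SFinite μ] [SFinite ν] {k : α → β → ℝ≥0∞} {f : β → ℝ≥0∞}
    (hk : Measurable (uncurry k)) (hf : Measurable f) {A B : ℝ≥0∞}
    (hA : ∀ x, ∫⁻ y, k x y ∂ν ≤ A) (hB : ∀ y, ∫⁻ x, k x y ∂μ ≤ B) :
    ∫⁻ x, (∫⁻ y, k x y * f y ∂ν) ^ 2 ∂μ ≤ A * B * ∫⁻ y, f y ^ 2 ∂ν := by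
  have hkf : Measurable (uncurry fun x y ↦ k x y * f y ^ 2) :=
    hk.mul ((hf.comp measurable_snd).pow_const 2)
  calc ∫⁻ x, (∫⁻ y, k x y * f y ∂ν) ^ 2 ∂μ
      ≤ ∫⁻ x, A * ∫⁻ y, k x y * f y ^ 2 ∂ν ∂μ := by
        refine lintegral_mono fun x ↦
          (sq_lintegral_mul_le_lintegral_mul_lintegral_mul_sq ?_ hf.aemeasurable).trans ?_
        · exact hk.of_uncurry_left.aemeasurable
        · gcongr
          exact hA x
    _ = A * ∫⁻ y, (∫⁻ x, k x y ∂μ) * f y ^ 2 ∂ν := by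
        rw [lintegral_const_mul _ hkf.lintegral_prod_right,
          lintegral_lintegral_swap hkf.aemeasurable]
        simp_rw [lintegral_mul_const _ hk.of_uncurry_right]
    _ ≤ A * ∫⁻ y, B * f y ^ 2 ∂ν := by gcongr; exact hB _
    _ = A * B * ∫⁻ y, f y ^ 2 ∂ν := by rw [lintegral_const_mul _ (hf.pow_const 2), mul_assoc]

lemma Lp_enorm_sq_eq_lintegral {E : Type*} [NormedAddCommGroup E] (u : Lp E 2 μ) :
    ‖u‖ₑ ^ 2 = ∫⁻ x, ‖u x‖ₑ ^ 2 ∂μ := by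
  simpa [Lp.enorm_def] using eLpNorm_nnreal_pow_eq_lintegral (f := u) (μ := μ)
    (two_ne_zero (α := ℝ≥0))

variable {𝕜 E F : Type*} [NontriviallyNormedField 𝕜] [NormedAddCommGroup E] [NormedSpace 𝕜 E]
  [NormedAddCommGroup F] [NormedSpace 𝕜 F]

theorem opNorm_le_sqrt_of_schur_test [SFinite μ] [SFinite ν] (T : Lp E 2 ν →L[𝕜] Lp F 2 μ)
    {k : α → β → ℝ≥0∞} (hk : Measurable (uncurry k)) {A B : ℝ≥0}
    (hA : ∀ x, ∫⁻ y, k x y ∂ν ≤ A) (hB : ∀ y, ∫⁻ x, k x y ∂μ ≤ B)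
    (hT : ∀ u : Lp E 2 ν, ∀ᵐ x ∂μ, ‖T u x‖ₑ ≤ ∫⁻ y, k x y * ‖u y‖ₑ ∂ν) :
    ‖T‖ ≤ NNReal.sqrt (A * B) := by
  refine T.opNorm_le_bound (NNReal.coe_nonneg _) fun u ↦ ?_
  have sq_le : ‖T u‖ₑ ^ 2 ≤ (A * B : ℝ≥0) * ‖u‖ₑ ^ 2 := by
    rw [Lp_enorm_sq_eq_lintegral, Lp_enorm_sq_eq_lintegral, ENNReal.coe_mul]
    exact (lintegral_mono_ae ((hT u).mono fun x hx ↦ pow_le_pow_left' hx 2)).trans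
      (lintegral_sq_lintegral_mul_le hk (Lp.stronglyMeasurable u).enorm hA hB)
  rw [← NNReal.sq_sqrt (A * B), enorm_eq_nnnorm, enorm_eq_nnnorm] at sq_le
  norm_cast at sq_le
  rw [← mul_pow, pow_le_pow_iff_left₀ zero_le zero_le two_ne_zero] at sq_le
  exact NNReal.coe_le_coe.2 sq_le

end SchurTest

lemma opNorm_le_of_band_kernel {E : Type*} [NormedAddCommGroup E] [NormedSpace ℂ E]
    {T : Lp E 2 (volume : Measure ℝ) →L[ℂ] Lp E 2 (volume : Measure ℝ)} {K : ℝ → ℝ → ℂ}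
    {κ d ρ : ℝ} (hρ : 0 ≤ ρ) (hT : ∀ u, T u =ᵐ[volume] fun x ↦ ∫ y, K x y • u y)
    (hK : ∀ x y, ‖K x y‖ ≤ κ) (hband : ∀ x y, K x y ≠ 0 → |x - y - d| ≤ ρ) :
    ‖T‖ ≤ 2 * ρ * κ := by
  have hκ : 0 ≤ κ := (norm_nonneg _).trans (hK 0 0)
  let g : ℝ → ℝ≥0∞ := (closedBall d ρ).indicator fun _ ↦ ENNReal.ofReal κ
  have hg : Measurable g := measurable_const.indicator measurableSet_closedBall
  have lintegral_g : ∫⁻ x, g x = (2 * ρ * κ).toNNReal := by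
    rw [lintegral_indicator_const measurableSet_closedBall, Real.volume_closedBall,
      ← ENNReal.ofReal_mul hκ, mul_comm κ]
    rfl
  have K_le_g (x y : ℝ) : ‖K x y‖ₑ ≤ g (x - y) := by
    by_cases hxy : K x y = 0
    · simp [hxy]
    · have mem : x - y ∈ closedBall d ρ := mem_closedBall_iff_norm.2 (hband x y hxy)
      simp only [g, Set.indicator_of_mem mem]
      rw [← ofReal_norm]
      exact ENNReal.ofReal_le_ofReal (hK x y)
  refine (opNorm_le_sqrt_of_schur_test T (k := fun x y ↦ g (x - y))
    (A := (2 * ρ * κ).toNNReal) (B := (2 * ρ * κ).toNNReal) (hg.comp measurable_sub)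
    (fun x ↦ ?_) (fun y ↦ ?_) fun u ↦ (hT u).mono fun x hx ↦ ?_).trans_eq ?_
  · rw [lintegral_sub_left_eq_self g x, lintegral_g]
  · rw [lintegral_sub_right_eq_self g y, lintegral_g]
  · rw [hx]
    refine (enorm_integral_le_lintegral_enorm _).trans (lintegral_mono fun y ↦ ?_)
    rw [enorm_smul]
    gcongr
    exact K_le_g x y
  · rw [NNReal.sqrt_mul_self, Real.coe_toNNReal _ (by positivity)]

lemma mul_norm_integral_le_of_forall_compl_eq_zero {α E : Type*} [MeasurableSpace α]
    {μ : Measure α} [NormedAddCommGroup E] [NormedSpace ℝ E] {f : α → E} {s : Set α} {c C : ℝ}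
    (hs : μ s < ∞) (hc : 0 ≤ c) (hf : ∀ x ∉ s, f x = 0) (hC : ∀ x ∈ s, c * ‖f x‖ ≤ C) :
    c * ‖∫ x, f x ∂μ‖ ≤ C * μ.real s := by
  rw [← setIntegral_eq_integral_of_forall_compl_eq_zero hf, ← Real.norm_of_nonneg hc,
    ← norm_smul, ← integral_smul]
  refine norm_setIntegral_le_of_norm_le_const hs fun x hx ↦ ?_
  rw [norm_smul, Real.norm_of_nonneg hc]
  exact hC x hx

lemma hasCompactSupport_comp_prodMk_left {α β γ : Type*} [TopologicalSpace α] [T2Space α]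
    [TopologicalSpace β] [T2Space β] [Zero γ] {B : α × β → γ} (hB : HasCompactSupport B) (x : α) :
    HasCompactSupport fun y ↦ B (x, y) :=
  hB.comp_isClosedEmbedding <|
    LeftInverse.isClosedEmbedding (f := Prod.snd) (fun _ ↦ rfl) continuous_snd (by fun_prop)

section Oscillatory

variable {E F : Type*} [NormedAddCommGroup E] [NormedSpace ℝ E] [NormedAddCommGroup F]
  [NormedSpace ℂ F] {B : E × ℝ → F}

lemma fourier_fderiv_slice (hB : ContDiff ℝ 1 B) (hB' : HasCompactSupport B) (e : E) (w : ℝ) :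
    𝓕 (fun z ↦ fderiv ℝ B (e, z) (0, 1)) w = (2 * π * I * w) • 𝓕 (fun z ↦ B (e, z)) w := by
  have hderiv (z : ℝ) : HasDerivAt (fun z ↦ B (e, z)) (fderiv ℝ B (e, z) (0, 1)) z :=
    (hB.differentiable one_ne_zero (e, z)).hasFDerivAt.comp_hasDerivAt z
      ((hasDerivAt_const z e).prodMk (hasDerivAt_id z))
  have slice_integrable {G : E × ℝ → F} (hG : Continuous G) (hG' : HasCompactSupport G) :
      Integrable fun z ↦ G (e, z) :=
    (hG.comp (by fun_prop)).integrable_of_hasCompactSupport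
      (hasCompactSupport_comp_prodMk_left hG' e)
  have deriv_integrable : Integrable fun z ↦ fderiv ℝ B (e, z) (0, 1) :=
    slice_integrable ((hB.continuous_fderiv one_ne_zero).clm_apply continuous_const)
      (hB'.fderiv_apply ℝ _)
  have deriv_eq := funext fun z ↦ (hderiv z).deriv
  rw [← deriv_eq] at deriv_integrable ⊢
  exact congrFun (Real.fourier_deriv (slice_integrable hB.continuous hB')
    (fun z ↦ (hderiv z).differentiableAt) deriv_integrable) w

lemma exists_pow_mul_norm_fourier_slice_le (M : ℕ) (hB : ContDiff ℝ (⊤ : ℕ∞) B)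
    (hB' : HasCompactSupport B) :
    ∃ C, 0 ≤ C ∧ ∀ e w, |w| ^ M * ‖𝓕 (fun z ↦ B (e, z)) w‖ ≤ C := by
  induction M generalizing B with
  | zero =>
    obtain ⟨C, hC⟩ := hB'.exists_bound_of_continuous hB.continuous
    have hC₀ : 0 ≤ C := (norm_nonneg _).trans (hC 0)
    let s : Set ℝ := Prod.snd '' tsupport B
    refine ⟨C * volume.real s, by positivity, fun e w ↦ ?_⟩
    simp only [pow_zero, Real.fourier_eq]
    refine mul_norm_integral_le_of_forall_compl_eq_zero
      (hB'.isCompact.image continuous_snd).measure_lt_top zero_le_one (fun z hz ↦ ?_) fun z _ ↦ ?_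
    · rw [image_eq_zero_of_notMem_tsupport fun h ↦ hz ⟨(e, z), h, rfl⟩, smul_zero]
    · simpa [Circle.norm_smul] using hC (e, z)
  | succ M ih =>
    obtain ⟨C, hC₀, hC⟩ := ih (B := fun p ↦ fderiv ℝ B p (0, 1))
      ((hB.fderiv_right (by simp)).clm_apply contDiff_const) (hB'.fderiv_apply ℝ _)
    refine ⟨C, hC₀, fun e w ↦ ?_⟩
    calc |w| ^ (M + 1) * ‖𝓕 (fun z ↦ B (e, z)) w‖
        ≤ 2 * π * (|w| ^ (M + 1) * ‖𝓕 (fun z ↦ B (e, z)) w‖) :=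
          le_mul_of_one_le_left (by positivity) (by linarith [Real.pi_gt_three])
      _ = |w| ^ M * ‖𝓕 (fun z ↦ fderiv ℝ B (e, z) (0, 1)) w‖ := by
          rw [fourier_fderiv_slice (hB.of_le (by simp)) hB', norm_smul]
          simp only [pow_succ, Complex.norm_mul, Complex.norm_ofNat, norm_real, norm_eq_abs,
            abs_of_pos Real.pi_pos, norm_I, mul_one]
          ring
      _ ≤ C := hC e w

lemma norm_integral_cexp_smul_comp_sub_right (f : ℝ → F) (t θ c : ℝ) :
    ‖∫ z, cexp (I * (t * z + θ : ℝ)) • f (z - c)‖ = ‖𝓕 f (-(t / (2 * π)))‖ := by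
  rw [← integral_add_right_eq_self _ c]
  have split (z : ℝ) : cexp (I * (t * (z + c) + θ : ℝ)) • f (z + c - c) =
      cexp ((t * c + θ : ℝ) * I) • cexp ((-2 * π * z * -(t / (2 * π)) : ℝ) * I) • f z := by
    rw [smul_smul, ← Complex.exp_add, add_sub_cancel_right]
    congr 2
    push_cast
    field_simp
    ring
  simp_rw [split]
  rw [integral_smul, norm_smul, Complex.norm_exp_ofReal_mul_I, one_mul,
    Real.fourier_real_eq_integral_exp_smul]

lemma exists_pow_mul_norm_integral_cexp_smul_le (M : ℕ) (hB : ContDiff ℝ (⊤ : ℕ∞) B)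
    (hB' : HasCompactSupport B) :
    ∃ C, 0 ≤ C ∧ ∀ e t θ c,
      |t| ^ M * ‖∫ z, cexp (I * (t * z + θ : ℝ)) • B (e, z - c)‖ ≤ C := by
  obtain ⟨C, hC₀, hC⟩ := exists_pow_mul_norm_fourier_slice_le M hB hB'
  refine ⟨(2 * π) ^ M * C, by positivity, fun e t θ c ↦ ?_⟩
  have abs_t : |t| = 2 * π * |-(t / (2 * π))| := by
    rw [abs_neg, abs_div, abs_of_pos (a := 2 * π) (by positivity)]
    field_simp
  rw [norm_integral_cexp_smul_comp_sub_right (fun z ↦ B (e, z)), abs_t, mul_pow, mul_assoc]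
  gcongr
  exact hC e _

end Oscillatory

section WeylKernel

/-- The integrand of `weylKernel`, as a function of the momentum variable `η`. -/
def weylIntegrand (h : ℝ) (a : ℝ × ℝ → ℝ) (y z η : ℝ) : ℂ :=
  cexp (I * ((y - z) * η / h : ℝ)) * (a ((y + z) / 2, η) : ℝ)

variable {h : ℝ} {a : ℝ × ℝ → ℝ} {c : ℝ × ℝ} {r : ℝ}

lemma mem_closedBall_real_prod_iff_abs {p : ℝ × ℝ} :
    p ∈ closedBall c r ↔ |p.1 - c.1| ≤ r ∧ |p.2 - c.2| ≤ r := by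
  rw [mem_closedBall, Prod.dist_eq, max_le_iff, Real.dist_eq, Real.dist_eq]

lemma abs_sub_le_of_weylIntegrand_ne_zero (ha : support a ⊆ closedBall c r) {y z η : ℝ}
    (hne : weylIntegrand h a y z η ≠ 0) : |(y + z) / 2 - c.1| ≤ r ∧ |η - c.2| ≤ r :=
  mem_closedBall_real_prod_iff_abs.1 (ha (ofReal_ne_zero.1 (right_ne_zero_of_mul hne)))

lemma abs_midpoint_sub_le_of_weylKernel_ne_zero (ha : support a ⊆ closedBall c r) {y z : ℝ}
    (hne : weylKernel h a y z ≠ 0) : |(y + z) / 2 - c.1| ≤ r := by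
  contrapose! hne
  have integrand_eq_zero (η : ℝ) : weylIntegrand h a y z η = 0 := by
    contrapose! hne
    exact (abs_sub_le_of_weylIntegrand_ne_zero ha hne).1
  exact mul_eq_zero_of_right _ (integral_eq_zero_of_ae (.of_forall integrand_eq_zero))

lemma norm_weylPrefactor_le (hh : 0 < h) : ‖((1 / (2 * π * h) : ℝ) : ℂ)‖ ≤ h⁻¹ := by
  rw [Complex.norm_real, Real.norm_of_nonneg (by positivity), one_div]
  exact inv_anti₀ hh (le_mul_of_one_le_left hh.le (by linarith [Real.pi_gt_three]))

lemma norm_weylKernel_le (hh : 0 < h) (y z : ℝ) :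
    ‖weylKernel h a y z‖ ≤ h⁻¹ * ‖∫ η, weylIntegrand h a y z η‖ :=
  (norm_mul_le _ _).trans (by gcongr; exacts [norm_weylPrefactor_le hh, le_rfl])

@[fun_prop]
lemma continuous_weylIntegrand {X : Type*} [TopologicalSpace X] (ha : Continuous a)
    {f g k : X → ℝ} (hf : Continuous f) (hg : Continuous g) (hk : Continuous k) :
    Continuous fun x ↦ weylIntegrand h a (f x) (g x) (k x) := by
  unfold weylIntegrand
  fun_prop

lemma continuous_weylKernel (ha : Continuous a) (ha' : support a ⊆ closedBall c r) :
    Continuous (uncurry (weylKernel h a)) := by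
  refine continuous_const.mul (continuousOn_univ.1 ?_)
  refine continuousOn_integral_of_compact_support (f := fun p : ℝ × ℝ ↦ weylIntegrand h a p.1 p.2)
    (isCompact_closedBall c.2 r) (Continuous.continuousOn ?_) fun p η _ hη ↦ ?_
  · unfold uncurry
    fun_prop
  · contrapose! hη
    simpa [Real.dist_eq] using (abs_sub_le_of_weylIntegrand_ne_zero ha' hη).2

lemma continuous_shiftSymbol (ha : Continuous a) (i : ℤ × ℤ) : Continuous (shiftSymbol a i) :=
  ha.comp (by fun_prop)

lemma support_shiftSymbol_subset_closedBall (ha : support a ⊆ closedBall 0 r) (i : ℤ × ℤ) :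
    support (shiftSymbol a i) ⊆ closedBall ((i.1 : ℝ), (i.2 : ℝ)) r := by
  refine fun p hp ↦ mem_closedBall_real_prod_iff_abs.2 ?_
  simpa [mem_closedBall_real_prod_iff_abs] using ha hp

lemma exists_pow_mul_norm_weylKernel_shiftSymbol_le (ha : ContDiff ℝ (⊤ : ℕ∞) a)
    (ha' : HasCompactSupport a) (M : ℕ) :
    ∃ C, 0 ≤ C ∧ ∀ h, 0 < h → ∀ (i : ℤ × ℤ) (y z : ℝ),
      |(y - z) / h| ^ M * ‖weylKernel h (shiftSymbol a i) y z‖ ≤ C / h := by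
  obtain ⟨C, hC₀, hC⟩ := exists_pow_mul_norm_integral_cexp_smul_le M
    (Complex.ofRealCLM.contDiff.comp ha) (ha'.comp_left Complex.ofReal_zero)
  refine ⟨C, hC₀, fun h hh i y z ↦ ?_⟩
  have integral_eq : ∫ η, weylIntegrand h (shiftSymbol a i) y z η =
      ∫ η, cexp (I * ((y - z) / h * η + 0 : ℝ)) • (a ((y + z) / 2 - i.1, η - i.2) : ℂ) := by
    simp only [weylIntegrand, shiftSymbol, smul_eq_mul, add_zero, div_mul_eq_mul_div]
  calc |(y - z) / h| ^ M * ‖weylKernel h (shiftSymbol a i) y z‖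
      ≤ |(y - z) / h| ^ M * (h⁻¹ * ‖∫ η, weylIntegrand h (shiftSymbol a i) y z η‖) := by
        gcongr
        exact norm_weylKernel_le hh y z
    _ = h⁻¹ * (|(y - z) / h| ^ M * ‖∫ η, weylIntegrand h (shiftSymbol a i) y z η‖) := by ring
    _ ≤ h⁻¹ * C := by
        rw [integral_eq]
        gcongr
        exact hC _ _ _ _
    _ = C / h := inv_mul_eq_div h C

end WeylKernel

lemma locallyIntegrable_comp_snd {X Y E : Type*} [TopologicalSpace X] [MeasurableSpace X]
    [TopologicalSpace Y] [MeasurableSpace Y] [NormedAddCommGroup E] {μ : Measure X} {ν : Measure Y}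
    [IsLocallyFiniteMeasure μ] [SFinite μ] [SFinite ν] {u : Y → E} (hu : LocallyIntegrable u ν) :
    LocallyIntegrable (fun p : X × Y ↦ u p.2) (μ.prod ν) := by
  rintro ⟨x, y⟩
  obtain ⟨U, hU, hμU⟩ := μ.finiteAt_nhds x
  obtain ⟨V, hV, huV⟩ := hu y
  refine ⟨U ×ˢ V, prod_mem_nhds hU hV, ?_⟩
  have : IsFiniteMeasure (μ.restrict U) := isFiniteMeasure_restrict.2 hμU.ne
  rw [IntegrableOn, ← Measure.prod_restrict]
  exact huV.integrable.comp_snd _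

lemma latticeNorm_nonneg (n : ℤ × ℤ) : 0 ≤ latticeNorm n := Real.sqrt_nonneg _

lemma latticeNorm_le_abs_add_abs (n : ℤ × ℤ) : latticeNorm n ≤ |(n.1 : ℝ)| + |(n.2 : ℝ)| := by
  rw [latticeNorm, ← sq_abs (n.1 : ℝ), ← sq_abs (n.2 : ℝ)]
  refine Real.sqrt_le_iff.2 ⟨by positivity, ?_⟩
  nlinarith [abs_nonneg (n.1 : ℝ), abs_nonneg (n.2 : ℝ)]

lemma one_le_latticeNorm {n : ℤ × ℤ} (hn : n ≠ 0) : 1 ≤ latticeNorm n := by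
  have sq_sum_ne_zero : n.1 ^ 2 + n.2 ^ 2 ≠ 0 := by
    contrapose! hn
    obtain ⟨h₁, h₂⟩ := (add_eq_zero_iff_of_nonneg (sq_nonneg n.1) (sq_nonneg n.2)).1 hn
    exact Prod.ext (sq_eq_zero_iff.1 h₁) (sq_eq_zero_iff.1 h₂)
  have one_le_sq_sum : 1 ≤ n.1 ^ 2 + n.2 ^ 2 :=
    Int.add_one_le_of_lt (lt_of_le_of_ne' (by positivity) sq_sum_ne_zero)
  rw [latticeNorm, Real.one_le_sqrt]
  exact_mod_cast one_le_sq_sum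

section Composition

variable {h : ℝ} {a b : ℝ × ℝ → ℝ} {c c' : ℝ × ℝ} {r r' : ℝ}

/-- The integral kernel of the composition of the Weyl quantizations of `a` and `b`. -/
def compKernel (h : ℝ) (a b : ℝ × ℝ → ℝ) (y s : ℝ) : ℂ :=
  ∫ z, weylKernel h a y z * weylKernel h b z s

lemma abs_sub_le_of_compKernel_ne_zero (ha : support a ⊆ closedBall c r)
    (hb : support b ⊆ closedBall c' r') {y s : ℝ} (hne : compKernel h a b y s ≠ 0) :
    |y - s - 2 * (c.1 - c'.1)| ≤ 2 * (r + r') := by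
  obtain ⟨z, hz⟩ : ∃ z, weylKernel h a y z * weylKernel h b z s ≠ 0 := by
    contrapose! hne
    exact integral_eq_zero_of_ae (.of_forall hne)
  have hyz := abs_le.1 (abs_midpoint_sub_le_of_weylKernel_ne_zero ha (left_ne_zero_of_mul hz))
  have hzs := abs_le.1 (abs_midpoint_sub_le_of_weylKernel_ne_zero hb (right_ne_zero_of_mul hz))
  exact abs_le.2 ⟨by linarith, by linarith⟩

lemma hasCompactSupport_weylKernel_mul_weylKernel (ha : support a ⊆ closedBall c r)
    (hb : support b ⊆ closedBall c' r') (y : ℝ) :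
    HasCompactSupport fun p : ℝ × ℝ ↦ weylKernel h a y p.1 * weylKernel h b p.1 p.2 := by
  refine .of_support_subset_isCompact (K := closedBall (2 * c.1 - y) (2 * r) ×ˢ
    closedBall (2 * (c'.1 - c.1) + y) (2 * (r + r')))
    ((isCompact_closedBall _ _).prod (isCompact_closedBall _ _)) fun p hp ↦ ?_
  have hyz := abs_le.1 (abs_midpoint_sub_le_of_weylKernel_ne_zero ha (left_ne_zero_of_mul hp))
  have hzs := abs_le.1 (abs_midpoint_sub_le_of_weylKernel_ne_zero hb (right_ne_zero_of_mul hp))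
  simp only [Set.mem_prod, mem_closedBall, Real.dist_eq, abs_le]
  refine ⟨⟨?_, ?_⟩, ?_, ?_⟩ <;> linarith

lemma comp_ae_eq_integral_compKernel (ha : Continuous a) (ha' : support a ⊆ closedBall c r)
    (hb : Continuous b) (hb' : support b ⊆ closedBall c' r') {S T : L2R →L[ℂ] L2R}
    (hS : IsWeylQuant h a S) (hT : IsWeylQuant h b T) (u : L2R) :
    S.comp T u =ᵐ[volume] fun y ↦ ∫ s, compKernel h a b y s * u s := by
  filter_upwards [hS (T u)] with y hy
  have integrable_kernels : Integrable (uncurry fun z s ↦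
      weylKernel h a y z * weylKernel h b z s * u s) (volume.prod volume) := by
    have u_loc : LocallyIntegrable (u : ℝ → ℂ) := (Lp.memLp u).locallyIntegrable (by norm_num)
    refine (locallyIntegrable_comp_snd u_loc).integrable_smul_left_of_hasCompactSupport
      (g := fun p ↦ weylKernel h a y p.1 * weylKernel h b p.1 p.2) ?_
      (hasCompactSupport_weylKernel_mul_weylKernel ha' hb' y)
    exact ((continuous_weylKernel ha ha').comp (.prodMk continuous_const continuous_fst)).mul
      (continuous_weylKernel hb hb')
  calc S.comp T u y
      = ∫ z, weylKernel h a y z * ∫ s, weylKernel h b z s * u s := by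
        rw [ContinuousLinearMap.comp_apply, hy]
        exact integral_congr_ae ((hT u).mono fun z hz ↦ congrArg (weylKernel h a y z * ·) hz)
    _ = ∫ z, ∫ s, weylKernel h a y z * weylKernel h b z s * u s := by
        simp_rw [mul_assoc, integral_const_mul]
    _ = ∫ s, compKernel h a b y s * u s := by
        rw [integral_integral_swap integrable_kernels]
        simp_rw [integral_mul_const, compKernel]

lemma norm_comp_le_of_norm_compKernel_le (ha : Continuous a) (ha' : support a ⊆ closedBall c r)
    (hb : Continuous b) (hb' : support b ⊆ closedBall c' r') (hr : r + r' ≤ 1)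
    {S T : L2R →L[ℂ] L2R} (hS : IsWeylQuant h a S) (hT : IsWeylQuant h b T) {κ : ℝ}
    (hκ : ∀ y s, ‖compKernel h a b y s‖ ≤ κ) : ‖S.comp T‖ ≤ 4 * κ := by
  refine (opNorm_le_of_band_kernel zero_le_two
    (comp_ae_eq_integral_compKernel ha ha' hb hb' hS hT) hκ fun y s hys ↦
      (abs_sub_le_of_compKernel_ne_zero ha' hb' hys).trans (by linarith)).trans_eq (by ring)

lemma mul_norm_compKernel_le (ha : support a ⊆ closedBall c r) {y s w D : ℝ} (hw : 0 ≤ w)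
    (hD : ∀ z, w * ‖weylKernel h a y z * weylKernel h b z s‖ ≤ D) :
    w * ‖compKernel h a b y s‖ ≤ D * volume.real (closedBall (0 : ℝ) (2 * r)) := by
  rw [← Measure.addHaar_real_closedBall_center volume (2 * c.1 - y)]
  refine mul_norm_integral_le_of_forall_compl_eq_zero measure_closedBall_lt_top hw
    (fun z hz ↦ ?_) fun z _ ↦ hD z
  contrapose! hz
  have hyz := abs_le.1 (abs_midpoint_sub_le_of_weylKernel_ne_zero ha (left_ne_zero_of_mul hz))
  rw [mem_closedBall, Real.dist_eq, abs_le]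
  exact ⟨by linarith, by linarith⟩

lemma exists_position_pow_mul_norm_compKernel_le (ha : ContDiff ℝ (⊤ : ℕ∞) a)
    (ha' : support a ⊆ closedBall 0 r) (hb : ContDiff ℝ (⊤ : ℕ∞) b) (hb' : HasCompactSupport b)
    (M : ℕ) :
    ∃ C, 0 ≤ C ∧ ∀ h, 0 < h → ∀ (i j : ℤ × ℤ) (y s : ℝ),
      |(y - s) / h| ^ M * ‖compKernel h (shiftSymbol a i) (shiftSymbol b j) y s‖ ≤ C / h ^ 2 := by
  have ha'' := HasCompactSupport.of_support_subset_isCompact (isCompact_closedBall 0 r) ha'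
  obtain ⟨A, hA₀, hA⟩ := exists_pow_mul_norm_weylKernel_shiftSymbol_le ha ha'' 0
  obtain ⟨A', hA₀', hA'⟩ := exists_pow_mul_norm_weylKernel_shiftSymbol_le ha ha'' M
  obtain ⟨B, hB₀, hB⟩ := exists_pow_mul_norm_weylKernel_shiftSymbol_le hb hb' 0
  obtain ⟨B', hB₀', hB'⟩ := exists_pow_mul_norm_weylKernel_shiftSymbol_le hb hb' M
  simp only [pow_zero, one_mul] at hA hB
  refine ⟨2 ^ (M - 1) * (A' * B + A * B') * volume.real (closedBall (0 : ℝ) (2 * r)),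
    by positivity, fun h hh i j y s ↦ ?_⟩
  rw [mul_div_right_comm]
  refine mul_norm_compKernel_le (support_shiftSymbol_subset_closedBall ha' i) (by positivity)
    fun z ↦ ?_
  set p := weylKernel h (shiftSymbol a i) y z
  set q := weylKernel h (shiftSymbol b j) z s
  have triangle : |(y - s) / h| ^ M ≤
      2 ^ (M - 1) * (|(y - z) / h| ^ M + |(z - s) / h| ^ M) := by
    refine (pow_le_pow_left₀ (abs_nonneg _) ?_ M).trans
      (add_pow_le (abs_nonneg _) (abs_nonneg _) M)
    simpa [← add_div] using abs_add_le ((y - z) / h) ((z - s) / h)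
  calc |(y - s) / h| ^ M * ‖p * q‖
      ≤ 2 ^ (M - 1) * (|(y - z) / h| ^ M + |(z - s) / h| ^ M) * (‖p‖ * ‖q‖) := by
        rw [norm_mul]
        gcongr
    _ = 2 ^ (M - 1) * (|(y - z) / h| ^ M * ‖p‖ * ‖q‖ + ‖p‖ * (|(z - s) / h| ^ M * ‖q‖)) := by
        ring
    _ ≤ 2 ^ (M - 1) * (A' / h * (B / h) + A / h * (B' / h)) := by
        gcongr
        exacts [hA' h hh i y z, hB h hh j z s, hA h hh i y z, hB' h hh j z s]
    _ = 2 ^ (M - 1) * (A' * B + A * B') / h ^ 2 := by ring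

lemma integrable_weylIntegrand_mul_weylIntegrand (ha : Continuous a)
    (ha' : support a ⊆ closedBall c r) (hb : Continuous b) (hb' : support b ⊆ closedBall c' r')
    (y s : ℝ) :
    Integrable (uncurry fun (z : ℝ) (p : ℝ × ℝ) ↦
      weylIntegrand h a y z p.1 * weylIntegrand h b z s p.2) (volume.prod volume) := by
  refine Continuous.integrable_of_hasCompactSupport (by unfold uncurry; fun_prop) <|
    .of_support_subset_isCompact (K := closedBall (2 * c.1 - y) (2 * r) ×ˢ
      closedBall c.2 r ×ˢ closedBall c'.2 r') ((isCompact_closedBall _ _).prod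
        ((isCompact_closedBall _ _).prod (isCompact_closedBall _ _))) ?_
  rintro ⟨z, η, ξ⟩ hne
  obtain ⟨hyz, hη⟩ := abs_sub_le_of_weylIntegrand_ne_zero ha' (left_ne_zero_of_mul hne)
  obtain ⟨-, hξ⟩ := abs_sub_le_of_weylIntegrand_ne_zero hb' (right_ne_zero_of_mul hne)
  refine ⟨?_, hη, hξ⟩
  rw [abs_le] at hyz
  rw [mem_closedBall, Real.dist_eq, abs_le]
  exact ⟨by linarith, by linarith⟩

lemma norm_compKernel_le (hh : 0 < h) (ha : Continuous a) (ha' : support a ⊆ closedBall c r)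
    (hb : Continuous b) (hb' : support b ⊆ closedBall c' r') (y s : ℝ) :
    ‖compKernel h a b y s‖ ≤ (h ^ 2)⁻¹ *
      ‖∫ p : ℝ × ℝ, ∫ z, weylIntegrand h a y z p.1 * weylIntegrand h b z s p.2‖ := by
  let κ : ℂ := (1 / (2 * π * h) : ℝ)
  have compKernel_eq : compKernel h a b y s = κ ^ 2 *
      ∫ p : ℝ × ℝ, ∫ z, weylIntegrand h a y z p.1 * weylIntegrand h b z s p.2 := by
    rw [← integral_integral_swap (integrable_weylIntegrand_mul_weylIntegrand ha ha' hb hb' y s),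
      ← integral_const_mul]
    refine integral_congr_ae (.of_forall fun z ↦ ?_)
    beta_reduce
    rw [Measure.volume_eq_prod, integral_prod_mul (weylIntegrand h a y z) (weylIntegrand h b z s),
      sq, mul_mul_mul_comm]
    rfl
  have norm_κ_le : ‖κ‖ ≤ h⁻¹ := norm_weylPrefactor_le hh
  rw [compKernel_eq, norm_mul, norm_pow, ← inv_pow]
  gcongr

/-- The amplitude of the position integral of a product of two Weyl integrands at fixed momenta
`η`, `ξ`, as a function of `((q, η, ξ), w)`: here `w / 2` and `w / 2 + q` are the first arguments
of the two symbols, so that `w` is the integrated position up to a translation. -/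
def compAmplitude (a b : ℝ × ℝ → ℝ) (p : (ℝ × ℝ × ℝ) × ℝ) : ℂ :=
  (a (p.2 / 2, p.1.2.1) * b (p.2 / 2 + p.1.1, p.1.2.2) : ℝ)

lemma contDiff_compAmplitude {n : WithTop ℕ∞} (ha : ContDiff ℝ n a) (hb : ContDiff ℝ n b) :
    ContDiff ℝ n (compAmplitude a b) :=
  Complex.ofRealCLM.contDiff.comp (.mul (ha.comp (by fun_prop)) (hb.comp (by fun_prop)))

lemma hasCompactSupport_compAmplitude (ha : HasCompactSupport a) (hb : HasCompactSupport b) :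
    HasCompactSupport (compAmplitude a b) := by
  have tensor : HasCompactSupport fun p : (ℝ × ℝ) × ℝ × ℝ ↦ (a p.1 * b p.2 : ℂ) :=
    .of_support_subset_isCompact (ha.isCompact.prod hb.isCompact) fun p hp ↦
      ⟨subset_tsupport a (by simpa using left_ne_zero_of_mul hp),
        subset_tsupport b (by simpa using right_ne_zero_of_mul hp)⟩
  let coords (p : (ℝ × ℝ × ℝ) × ℝ) : (ℝ × ℝ) × ℝ × ℝ :=
    ((p.2 / 2, p.1.2.1), (p.2 / 2 + p.1.1, p.1.2.2))
  let coords_inv (p : (ℝ × ℝ) × ℝ × ℝ) : (ℝ × ℝ × ℝ) × ℝ :=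
    ((p.2.1 - p.1.1, p.1.2, p.2.2), 2 * p.1.1)
  have leftInverse : LeftInverse coords_inv coords := fun p ↦ by
    simp [coords, coords_inv, mul_div_cancel₀]
  have compAmplitude_eq : compAmplitude a b = (fun p ↦ (a p.1 * b p.2 : ℂ)) ∘ coords :=
    funext fun p ↦ Complex.ofReal_mul _ _
  rw [compAmplitude_eq]
  exact tensor.comp_isClosedEmbedding (leftInverse.isClosedEmbedding (by fun_prop) (by fun_prop))

lemma weylIntegrand_shiftSymbol_mul (a b : ℝ × ℝ → ℝ) (h : ℝ) (i j : ℤ × ℤ) (y z s η ξ : ℝ) :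
    weylIntegrand h (shiftSymbol a i) y z η * weylIntegrand h (shiftSymbol b j) z s ξ =
      cexp (I * ((ξ - η) / h * z + (y * η - s * ξ) / h : ℝ)) •
        compAmplitude a b (((s - y) / 2 + (i.1 - j.1), η - i.2, ξ - j.2), z - (2 * i.1 - y)) := by
  have phase : cexp (I * ((y - z) * η / h : ℝ)) * cexp (I * ((z - s) * ξ / h : ℝ)) =
      cexp (I * ((ξ - η) / h * z + (y * η - s * ξ) / h : ℝ)) := by
    rw [← Complex.exp_add, ← mul_add, ← Complex.ofReal_add]
    congr 3
    ring
  have a_arg : (z - (2 * i.1 - y)) / 2 = (y + z) / 2 - i.1 := by ring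
  have b_arg : (y + z) / 2 - i.1 + ((s - y) / 2 + (i.1 - j.1)) = (z + s) / 2 - j.1 := by ring
  simp only [weylIntegrand, shiftSymbol, compAmplitude, a_arg, b_arg]
  rw [mul_mul_mul_comm, phase, ← Complex.ofReal_mul, smul_eq_mul]

lemma one_sub_mul_abs_intCast_le_abs {n : ℤ} {x ρ : ℝ} (hx : |x - n| ≤ ρ) :
    (1 - ρ) * |(n : ℝ)| ≤ |x| := by
  rcases eq_or_ne n 0 with rfl | hn
  · simp
  · have one_le : 1 ≤ |(n : ℝ)| := mod_cast Int.one_le_abs hn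
    have abs_n_le : |(n : ℝ)| ≤ |x| + |x - n| := by
      linarith [abs_sub_abs_le_abs_sub (n : ℝ) x, abs_sub_comm (n : ℝ) x]
    nlinarith [abs_nonneg (x - n)]

lemma one_sub_mul_abs_intCast_sub_le_abs_sub {m n : ℤ} {x y : ℝ} (hx : x ∈ closedBall (m : ℝ) r)
    (hy : y ∈ closedBall (n : ℝ) r') : (1 - (r + r')) * |((m - n : ℤ) : ℝ)| ≤ |x - y| := by
  refine one_sub_mul_abs_intCast_le_abs ?_
  rw [Int.cast_sub, sub_sub_sub_comm]
  exact (abs_sub _ _).trans (add_le_add hx hy)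

lemma integral_weylIntegrand_mul_eq_zero (ha : support a ⊆ closedBall c r)
    (hb : support b ⊆ closedBall c' r') (y s : ℝ) {p : ℝ × ℝ}
    (hp : p ∉ closedBall c.2 r ×ˢ closedBall c'.2 r') :
    ∫ z, weylIntegrand h a y z p.1 * weylIntegrand h b z s p.2 = 0 := by
  refine integral_eq_zero_of_ae (.of_forall fun z ↦ ?_)
  contrapose! hp
  exact ⟨(abs_sub_le_of_weylIntegrand_ne_zero ha (left_ne_zero_of_mul hp)).2,
    (abs_sub_le_of_weylIntegrand_ne_zero hb (right_ne_zero_of_mul hp)).2⟩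

lemma exists_momentum_gap_pow_mul_norm_compKernel_le (ha : ContDiff ℝ (⊤ : ℕ∞) a)
    (ha' : support a ⊆ closedBall 0 r) (hb : ContDiff ℝ (⊤ : ℕ∞) b)
    (hb' : support b ⊆ closedBall 0 r') (hr : r + r' ≤ 1) (M : ℕ) :
    ∃ C, 0 ≤ C ∧ ∀ h, 0 < h → ∀ (i j : ℤ × ℤ) (y s : ℝ),
      ((1 - (r + r')) * |((i - j).2 : ℝ)| / h) ^ M *
        ‖compKernel h (shiftSymbol a i) (shiftSymbol b j) y s‖ ≤ C / h ^ 2 := by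
  obtain ⟨C, hC₀, hC⟩ := exists_pow_mul_norm_integral_cexp_smul_le M
    (contDiff_compAmplitude ha hb) (hasCompactSupport_compAmplitude
      (.of_support_subset_isCompact (isCompact_closedBall 0 r) ha')
      (.of_support_subset_isCompact (isCompact_closedBall 0 r') hb'))
  refine ⟨C * volume.real (closedBall (0 : ℝ) r ×ˢ closedBall (0 : ℝ) r'), by positivity,
    fun h hh i j y s ↦ ?_⟩
  have hai := support_shiftSymbol_subset_closedBall ha' i
  have hbj := support_shiftSymbol_subset_closedBall hb' j
  have volume_box_lt_top : volume (closedBall (i.2 : ℝ) r ×ˢ closedBall (j.2 : ℝ) r') < ∞ :=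
    ((isCompact_closedBall _ _).prod (isCompact_closedBall _ _)).measure_lt_top
  set gap := (1 - (r + r')) * |((i - j).2 : ℝ)| / h
  have gap_nonneg : 0 ≤ gap := by positivity
  have gap_le {p : ℝ × ℝ} (hp : p ∈ closedBall (i.2 : ℝ) r ×ˢ closedBall (j.2 : ℝ) r') :
      gap ≤ |(p.2 - p.1) / h| := by
    rw [abs_div, abs_of_pos hh, abs_sub_comm]
    exact div_le_div_of_nonneg_right (one_sub_mul_abs_intCast_sub_le_abs_sub hp.1 hp.2) hh.le
  calc gap ^ M * ‖compKernel h (shiftSymbol a i) (shiftSymbol b j) y s‖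
      ≤ gap ^ M * ((h ^ 2)⁻¹ * ‖∫ p : ℝ × ℝ, ∫ z, weylIntegrand h (shiftSymbol a i) y z p.1 *
          weylIntegrand h (shiftSymbol b j) z s p.2‖) := by
        gcongr
        exact norm_compKernel_le hh (continuous_shiftSymbol ha.continuous i) hai
          (continuous_shiftSymbol hb.continuous j) hbj y s
    _ = gap ^ M * ‖∫ p : ℝ × ℝ, ∫ z, weylIntegrand h (shiftSymbol a i) y z p.1 *
          weylIntegrand h (shiftSymbol b j) z s p.2‖ / h ^ 2 := by ring
    _ ≤ C * volume.real (closedBall (i.2 : ℝ) r ×ˢ closedBall (j.2 : ℝ) r') / h ^ 2 := by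
        refine div_le_div_of_nonneg_right ?_ (sq_nonneg h)
        refine mul_norm_integral_le_of_forall_compl_eq_zero volume_box_lt_top
          (pow_nonneg gap_nonneg M) (fun p ↦ integral_weylIntegrand_mul_eq_zero hai hbj y s)
          fun p hp ↦ ?_
        simp_rw [weylIntegrand_shiftSymbol_mul]
        exact (mul_le_mul_of_nonneg_right (pow_le_pow_left₀ gap_nonneg (gap_le hp) M)
          (norm_nonneg _)).trans (hC _ _ _ _)
    _ = C * volume.real (closedBall (0 : ℝ) r ×ˢ closedBall (0 : ℝ) r') / h ^ 2 := by
        simp only [Measure.volume_eq_prod, measureReal_prod_prod,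
          Measure.addHaar_real_closedBall_center volume (_ : ℝ)]

lemma exists_position_gap_pow_mul_norm_compKernel_le (ha : ContDiff ℝ (⊤ : ℕ∞) a)
    (ha' : support a ⊆ closedBall 0 r) (hb : ContDiff ℝ (⊤ : ℕ∞) b)
    (hb' : support b ⊆ closedBall 0 r') (hr : r + r' ≤ 1) (M : ℕ) :
    ∃ C, 0 ≤ C ∧ ∀ h, 0 < h → ∀ (i j : ℤ × ℤ) (y s : ℝ),
      ((1 - (r + r')) * |((i - j).1 : ℝ)| / h) ^ M *
        ‖compKernel h (shiftSymbol a i) (shiftSymbol b j) y s‖ ≤ C / h ^ 2 := by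
  obtain ⟨C, hC₀, hC⟩ := exists_position_pow_mul_norm_compKernel_le ha ha' hb
    (.of_support_subset_isCompact (isCompact_closedBall 0 r') hb') M
  refine ⟨C, hC₀, fun h hh i j y s ↦ ?_⟩
  by_cases hne : compKernel h (shiftSymbol a i) (shiftSymbol b j) y s = 0
  · rw [hne, norm_zero, mul_zero]
    positivity
  have band := abs_le.1 <| abs_sub_le_of_compKernel_ne_zero
    (support_shiftSymbol_subset_closedBall ha' i) (support_shiftSymbol_subset_closedBall hb' j) hne
  have gap_le : (1 - (r + r')) * |((i - j).1 : ℝ)| ≤ |(y - s) / 2| := by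
    refine one_sub_mul_abs_intCast_le_abs (abs_le.2 ?_)
    rw [Prod.fst_sub, Int.cast_sub]
    exact ⟨by linarith, by linarith⟩
  have half_le : |(y - s) / 2| ≤ |y - s| := by
    rw [abs_div, Nat.abs_ofNat]
    exact half_le_self (abs_nonneg _)
  refine le_trans ?_ (hC h hh i j y s)
  rw [abs_div, abs_of_pos hh]
  gcongr
  exact gap_le.trans half_le

lemma exists_latticeNorm_pow_mul_norm_compKernel_le (ha : ContDiff ℝ (⊤ : ℕ∞) a)
    (ha' : support a ⊆ closedBall 0 r) (hb : ContDiff ℝ (⊤ : ℕ∞) b)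
    (hb' : support b ⊆ closedBall 0 r') (hr : r + r' < 1) (M : ℕ) :
    ∃ C, 0 ≤ C ∧ ∀ h, 0 < h → ∀ (i j : ℤ × ℤ) (y s : ℝ),
      (latticeNorm (i - j) / h) ^ M *
        ‖compKernel h (shiftSymbol a i) (shiftSymbol b j) y s‖ ≤ C / h ^ 2 := by
  obtain ⟨P, hP₀, hP⟩ := exists_position_gap_pow_mul_norm_compKernel_le ha ha' hb hb' hr.le M
  obtain ⟨Q, hQ₀, hQ⟩ := exists_momentum_gap_pow_mul_norm_compKernel_le ha ha' hb hb' hr.le M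
  set δ := 1 - (r + r')
  have hδ : 0 < δ := sub_pos.2 hr
  refine ⟨(δ ^ M)⁻¹ * 2 ^ (M - 1) * (P + Q), by positivity, fun h hh i j y s ↦ ?_⟩
  set p := δ * |((i - j).1 : ℝ)| / h
  set q := δ * |((i - j).2 : ℝ)| / h
  set k := ‖compKernel h (shiftSymbol a i) (shiftSymbol b j) y s‖
  have lattice_le : latticeNorm (i - j) / h ≤ δ⁻¹ * (p + q) := by
    rw [← add_div, ← mul_add, mul_div_assoc, inv_mul_cancel_left₀ hδ.ne']
    gcongr
    exact latticeNorm_le_abs_add_abs _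
  calc (latticeNorm (i - j) / h) ^ M * k
      ≤ (δ⁻¹ * (p + q)) ^ M * k := by
        gcongr
        exact div_nonneg (latticeNorm_nonneg _) hh.le
    _ ≤ (δ ^ M)⁻¹ * (2 ^ (M - 1) * (p ^ M + q ^ M)) * k := by
        rw [mul_pow, inv_pow]
        gcongr
        exact add_pow_le (by positivity) (by positivity) M
    _ = (δ ^ M)⁻¹ * 2 ^ (M - 1) * (p ^ M * k + q ^ M * k) := by ring
    _ ≤ (δ ^ M)⁻¹ * 2 ^ (M - 1) * (P / h ^ 2 + Q / h ^ 2) := by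
        gcongr
        exacts [hP h hh i j y s, hQ h hh i j y s]
    _ = (δ ^ M)⁻¹ * 2 ^ (M - 1) * (P + Q) / h ^ 2 := by ring

lemma exists_latticeNorm_pow_mul_norm_comp_le (ha : ContDiff ℝ (⊤ : ℕ∞) a)
    (ha' : support a ⊆ closedBall 0 r) (hb : ContDiff ℝ (⊤ : ℕ∞) b)
    (hb' : support b ⊆ closedBall 0 r') (hr : r + r' < 1) (m : ℕ) :
    ∃ C, 0 ≤ C ∧ ∀ h, 0 < h → ∀ i j : ℤ × ℤ, i ≠ j → ∀ S T : L2R →L[ℂ] L2R,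
      IsWeylQuant h (shiftSymbol a i) S → IsWeylQuant h (shiftSymbol b j) T →
        (latticeNorm (i - j) / h) ^ m * ‖S.comp T‖ ≤ C := by
  obtain ⟨C, hC₀, hC⟩ := exists_latticeNorm_pow_mul_norm_compKernel_le ha ha' hb hb' hr (m + 2)
  refine ⟨4 * C, by positivity, fun h hh i j hij S T hS hT ↦ ?_⟩
  have one_le_norm := one_le_latticeNorm (sub_ne_zero.2 hij)
  set L := latticeNorm (i - j)
  have hL : 0 < L := one_pos.trans_le one_le_norm
  have comp_le : ‖S.comp T‖ ≤ 4 * (C / h ^ 2 / (L / h) ^ (m + 2)) :=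
    norm_comp_le_of_norm_compKernel_le (continuous_shiftSymbol ha.continuous i)
      (support_shiftSymbol_subset_closedBall ha' i) (continuous_shiftSymbol hb.continuous j)
      (support_shiftSymbol_subset_closedBall hb' j) hr.le hS hT fun y s ↦
        (le_div_iff₀' (by positivity)).2 (hC h hh i j y s)
  calc (L / h) ^ m * ‖S.comp T‖
      ≤ (L / h) ^ m * (4 * (C / h ^ 2 / (L / h) ^ (m + 2))) := by gcongr
    _ = 4 * C / L ^ 2 := by
        rw [pow_add, div_pow L h 2]
        field_simp
    _ ≤ 4 * C := div_le_self (by positivity) (one_le_pow₀ one_le_norm)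

end Composition

lemma rpow_le_pow_floor_add_pow_floor_add_one {x N : ℝ} (hx : 0 ≤ x) (hN : 0 ≤ N) :
    x ^ N ≤ x ^ ⌊N⌋₊ + x ^ (⌊N⌋₊ + 1) := by
  rcases le_total x 1 with hx₁ | hx₁
  · refine le_add_of_le_of_nonneg ?_ (by positivity)
    rw [← Real.rpow_natCast]
    exact Real.rpow_le_rpow_of_exponent_ge' hx hx₁ (Nat.cast_nonneg _) (Nat.floor_le hN)
  · refine le_add_of_nonneg_of_le (by positivity) ?_
    rw [← Real.rpow_natCast]
    exact Real.rpow_le_rpow_of_exponent_le hx₁ (by exact_mod_cast (Nat.lt_floor_add_one N).le)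

lemma exists_lt_half_support_subset_closedBall {a : ℝ × ℝ → ℝ}
    (ha : tsupport a ⊆ Set.Ioo (-(1 / 2) : ℝ) (1 / 2) ×ˢ Set.Ioo (-(1 / 2) : ℝ) (1 / 2)) :
    ∃ r < 1 / 2, support a ⊆ closedBall 0 r := by
  have square_eq :
      Set.Ioo (-(1 / 2) : ℝ) (1 / 2) ×ˢ Set.Ioo (-(1 / 2) : ℝ) (1 / 2) = ball 0 (1 / 2) := by
    rw [← Prod.mk_zero_zero, ← ball_prod_same, Real.ball_eq_Ioo, zero_sub, zero_add]
  obtain ⟨r, hr, har⟩ := exists_lt_subset_ball (isClosed_tsupport a) (square_eq ▸ ha)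
  exact ⟨r, hr, (subset_tsupport a).trans (har.trans ball_subset_closedBall)⟩

theorem weyl_disjoint_sites_composition_bound_general {a b : ℝ × ℝ → ℝ} {r r' : ℝ}
    (ha : ContDiff ℝ (⊤ : ℕ∞) a) (ha' : support a ⊆ closedBall 0 r)
    (hb : ContDiff ℝ (⊤ : ℕ∞) b) (hb' : support b ⊆ closedBall 0 r') (hr : r + r' < 1)
    {N : ℝ} (hN : 0 ≤ N) :
    ∃ C : ℝ, 0 < C ∧ ∀ h : ℝ, 0 < h → ∀ i j : ℤ × ℤ, i ≠ j → ∀ Ti Tj : L2R →L[ℂ] L2R,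
      IsWeylQuant h (shiftSymbol a i) Ti → IsWeylQuant h (shiftSymbol b j) Tj →
        ‖Ti.comp Tj‖ ≤ C * h ^ N * latticeNorm (i - j) ^ (-N) := by
  obtain ⟨C, hC₀, hC⟩ := exists_latticeNorm_pow_mul_norm_comp_le ha ha' hb hb' hr ⌊N⌋₊
  obtain ⟨D, hD₀, hD⟩ := exists_latticeNorm_pow_mul_norm_comp_le ha ha' hb hb' hr (⌊N⌋₊ + 1)
  refine ⟨C + D + 1, by positivity, fun h hh i j hij Ti Tj hTi hTj ↦ ?_⟩
  have hL : 0 < latticeNorm (i - j) := one_pos.trans_le (one_le_latticeNorm (sub_ne_zero.2 hij))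
  set L := latticeNorm (i - j)
  have rpow_mul_norm_le : (L / h) ^ N * ‖Ti.comp Tj‖ ≤ C + D + 1 := by
    grw [rpow_le_pow_floor_add_pow_floor_add_one (by positivity) hN, add_mul,
      hC h hh i j hij Ti Tj hTi hTj, hD h hh i j hij Ti Tj hTi hTj]
    exact (lt_add_one _).le
  rw [Real.rpow_neg hL.le, mul_assoc, ← div_eq_mul_inv, ← Real.div_rpow hh.le hL.le]
  rwa [← inv_div, Real.inv_rpow (by positivity), inv_mul_le_iff₀' (by positivity)]
    at rpow_mul_norm_le

theorem weyl_disjoint_sites_composition_bound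
    (a₀ : ℝ × ℝ → ℝ)
    (ha_smooth : ContDiff ℝ (⊤ : ℕ∞) a₀) (ha_supp : HasCompactSupport a₀)
    (ha_supp' : tsupport a₀ ⊆
      Set.Ioo (-(1/2) : ℝ) (1/2) ×ˢ Set.Ioo (-(1/2) : ℝ) (1/2)) :
    ∀ N : ℝ, 0 < N → ∃ C : ℝ, 0 < C ∧
      ∀ h : ℝ, 0 < h → h < 1 →
        ∀ i j : ℤ × ℤ, i ≠ j →
          ∀ Ti Tj : L2R →L[ℂ] L2R,
            IsWeylQuant h (shiftSymbol a₀ i) Ti →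
            IsWeylQuant h (shiftSymbol a₀ j) Tj →
            ‖Ti.comp Tj‖ ≤ C * h ^ N * (latticeNorm (i - j)) ^ (-N) := by
  obtain ⟨r, hr, hsupp⟩ := exists_lt_half_support_subset_closedBall ha_supp'
  exact fun N hN ↦ (weyl_disjoint_sites_composition_bound_general ha_smooth hsupp ha_smooth hsupp
    (by linarith) hN.le).imp fun C hC ↦ ⟨hC.1, fun h hh _ ↦ hC.2 h hh⟩
end
end

section
/- Let a₀ ∈ C_c^∞(ℝ²) be real-valued with supp a₀ ⊂ (−1/2, 1/2)², and let χ₀ ∈ C_c^∞(ℝ²) satisfy supp χ₀ ⊂ (−1/2, 1/2)² and χ₀ = 1 on an open neighborhood of supp a₀. For j ∈ ℤ² let a_j and χ_j be the translates of a₀ and χ₀ by j, let P_j := χ̂_j, and for a finite set Λ̃ ⊂ ℤ² let A := Σ_{j ∈ Λ̃} â_j and Q := I − Σ_{j ∈ Λ̃} P_j. Then for every N > 0 there exists C_N > 0, depending only on a₀, χ₀ and N but not on Λ̃, such that for all h ∈ (0,1) and all j ∈ Λ̃: ‖P_j ∘ A − â_j‖ ≤ C_N h^N and ‖Q ∘ A‖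 ≤ C_N h^N (operator norms on L²(ℝ)). -/
/-!
STATEMENT 3: With a₀, χ₀ ∈ C_c^∞(ℝ²) supported in (−1/2,1/2)², χ₀ ≡ 1 on an
open neighborhood of supp a₀, translates a_j, χ_j, quantizations
P_j := χ̂_j, A := Σ_{j∈Λ̃} â_j and Q := I − Σ_{j∈Λ̃} P_j: for every N > 0
there is C_N > 0, depending only on a₀, χ₀, N (not on Λ̃), such that for all
h ∈ (0,1) and j ∈ Λ̃, ‖P_j ∘ A − â_j‖ ≤ C_N h^N and ‖Q ∘ A‖ ≤ C_N h^N.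
-/

open MeasureTheory Complex Real

noncomputable section

/-!
The composition of two Weyl quantizations has a Schur kernel whose profile is the fibrewise Fourier
transform of the Moyal product of the symbols. At `H = 2πh = 0` this is the pointwise product, and
each derivative in `H` is bilinear in derivatives of the symbols. So for disjointly supported
symbols the product is `O(hᴺ)`, while `χ̂ b̂ - b̂ = O(hᴺ)` if `χ = 1` near the support of `b`.
Compactness of the supports in position and integration by parts in frequency show that the product
of quantizations translated by `j` and `k` also decays rapidly in `j - k`, and the geometric mean
of the two bounds gives both effects at once. Summing over `k` gives the estimate at a single site.

In `(1 - ∑ P_j) ∑ T_k = -∑ (P_j T_k - δ_{jk} T_k)` the norms of the summands add up to a multiple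
of the number of sites. The bound independent of that number comes from the Cotlar–Stein lemma: two
defect operators with distant indices are almost orthogonal because `P`, `T` decay off the
diagonal.
-/

namespace WeylCalculus

section CotlarStein

/-! ### The Cotlar–Stein inequality -/

theorem le_of_pow_two_pow_le_mul {x y c : ℝ} (hy : 0 < y)
    (h : ∀ k : ℕ, x ^ 2 ^ k ≤ c * y ^ 2 ^ k) : x ≤ y := by
  by_contra! hyx
  have h_ratio : 1 < x / y := (one_lt_div hy).2 hyx
  have h_tendsto : Filter.Tendsto (fun k : ℕ => (x / y) ^ 2 ^ k) Filter.atTop Filter.atTop :=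
    (tendsto_pow_atTop_atTop_of_one_lt h_ratio).comp
      (tendsto_pow_atTop_atTop_of_one_lt one_lt_two)
  obtain ⟨k, hk⟩ := (h_tendsto.eventually_gt_atTop c).exists
  rw [div_pow, lt_div_iff₀ (by positivity)] at hk
  exact hk.not_ge (h k)

theorem norm_mul_sum_le {B κ : Type*} [NormedRing B] [Fintype κ] {Z : κ → B} {x : B} {c : ℝ}
    (hZ : ∑ i, √(‖Z i‖ * ‖x * Z i‖) ≤ c) : ‖x * ∑ i, Z i‖ ≤ √‖x‖ * c := by
  have h_term (i : κ) : ‖x * Z i‖ ≤ √‖x‖ * √(‖Z i‖ * ‖x * Z i‖) := by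
    rw [← Real.sqrt_mul (norm_nonneg _), ← mul_assoc]
    refine Real.le_sqrt_of_sq_le ?_
    rw [sq]
    gcongr
    exact norm_mul_le _ _
  calc ‖x * ∑ i, Z i‖ ≤ ∑ i, ‖x * Z i‖ := by rw [Finset.mul_sum]; exact norm_sum_le _ _
    _ ≤ ∑ i, √‖x‖ * √(‖Z i‖ * ‖x * Z i‖) := by gcongr; exact h_term _
    _ ≤ √‖x‖ * c := by rw [← Finset.mul_sum]; gcongr

universe u

variable {B : Type*} [NormedRing B] [StarRing B] {ι : Type u} [Fintype ι] {X : ι → B} {A c : ℝ}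

theorem sum_sqrt_norm_star_mul_mul_le {κ : Type*} [Fintype κ] {Z : κ → B} (hA : 0 ≤ A)
    (h_left : ∀ k, ∑ l, √‖star (X k) * X l‖ ≤ A) (h_right : ∀ k, ∑ l, √‖X k * star (X l)‖ ≤ A)
    (hZ : ∀ m, ∑ i, √(‖Z i‖ * ‖X m * Z i‖) ≤ c) (m : ι) :
    ∑ p : ι × ι × κ, √(‖star (X p.1) * X p.2.1 * Z p.2.2‖ *
      ‖X m * (star (X p.1) * X p.2.1 * Z p.2.2)‖) ≤ A * (A * c) := by
  have hc : 0 ≤ c := (Finset.sum_nonneg fun i _ => Real.sqrt_nonneg _).trans (hZ m)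
  have h_term (k l : ι) (i : κ) :
      √(‖star (X k) * X l * Z i‖ * ‖X m * (star (X k) * X l * Z i)‖) ≤
        √‖X m * star (X k)‖ * (√‖star (X k) * X l‖ * √(‖Z i‖ * ‖X l * Z i‖)) := by
    rw [← Real.sqrt_mul (norm_nonneg _), ← Real.sqrt_mul (norm_nonneg _)]
    have h_split : X m * (star (X k) * X l * Z i) = X m * star (X k) * (X l * Z i) := by
      simp only [mul_assoc]
    refine Real.sqrt_le_sqrt ?_
    calc ‖star (X k) * X l * Z i‖ * ‖X m * (star (X k) * X l * Z i)‖
        ≤ (‖star (X k) * X l‖ * ‖Z i‖) * (‖X m * star (X k)‖ * ‖X l * Z i‖) := by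
          rw [h_split]; gcongr <;> exact norm_mul_le _ _
      _ = ‖X m * star (X k)‖ * (‖star (X k) * X l‖ * (‖Z i‖ * ‖X l * Z i‖)) := by ring
  calc _ = ∑ k, ∑ l, ∑ i, √(‖star (X k) * X l * Z i‖ * ‖X m * (star (X k) * X l * Z i)‖) := by
        simp only [Fintype.sum_prod_type]
    _ ≤ ∑ k, ∑ l, ∑ i, √‖X m * star (X k)‖ * (√‖star (X k) * X l‖ * √(‖Z i‖ * ‖X l * Z i‖)) := by
        gcongr; exact h_term _ _ _
    _ = ∑ k, √‖X m * star (X k)‖ *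
          ∑ l, √‖star (X k) * X l‖ * ∑ i, √(‖Z i‖ * ‖X l * Z i‖) := by
        simp only [Finset.mul_sum]
    _ ≤ ∑ k, √‖X m * star (X k)‖ * ∑ l, √‖star (X k) * X l‖ * c := by gcongr; exact hZ _
    _ ≤ ∑ k, √‖X m * star (X k)‖ * (A * c) := by
        gcongr with k
        rw [← Finset.sum_mul]
        exact mul_le_mul_of_nonneg_right (h_left k) hc
    _ ≤ A * (A * c) := by
        rw [← Finset.sum_mul]; exact mul_le_mul_of_nonneg_right (h_right m) (by positivity)

/-- The terms of the expansion of `(S⋆S)ⁿ` are the words `X_{k₁}⋆ X_{l₁} ⋯ X_{kₙ}⋆ X_{lₙ}`. -/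
theorem exists_star_mul_self_pow_eq_sum (hA : 0 ≤ A)
    (h_left : ∀ k, ∑ l, √‖star (X k) * X l‖ ≤ A) (h_right : ∀ k, ∑ l, √‖X k * star (X l)‖ ≤ A)
    (hc : ∀ m, √(‖(1 : B)‖ * ‖X m‖) ≤ c) (n : ℕ) :
    ∃ (κ : Type u) (_ : Fintype κ) (Z : κ → B),
      (star (∑ k, X k) * ∑ k, X k) ^ n = ∑ i, Z i ∧
        ∀ m, ∑ i, √(‖Z i‖ * ‖X m * Z i‖) ≤ (A ^ 2) ^ n * c := by
  induction n with
  | zero => exact ⟨PUnit, inferInstance, fun _ => 1, by simp, by simpa using hc⟩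
  | succ n ih =>
    obtain ⟨κ, _, Z, h_sum, hZ⟩ := ih
    refine ⟨ι × ι × κ, inferInstance, fun p => star (X p.1) * X p.2.1 * Z p.2.2, ?_, fun m => ?_⟩
    · rw [pow_succ', h_sum, star_sum, Finset.sum_mul_sum, Finset.sum_mul]
      simp only [Finset.sum_mul_sum, Fintype.sum_prod_type]
    · refine (sum_sqrt_norm_star_mul_mul_le hA h_left h_right hZ m).trans_eq ?_
      ring

theorem exists_norm_star_mul_self_pow_succ_le (hA : 0 ≤ A)
    (h_left : ∀ k, ∑ l, √‖star (X k) * X l‖ ≤ A) (h_right : ∀ k, ∑ l, √‖X k * star (X l)‖ ≤ A) :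
    ∃ C : ℝ, ∀ n : ℕ, ‖(star (∑ k, X k) * ∑ k, X k) ^ (n + 1)‖ ≤ C * (A ^ 2) ^ n := by
  set S := ∑ k, X k
  set c := ∑ m, √(‖(1 : B)‖ * ‖X m‖)
  refine ⟨‖star S‖ * ∑ m, √‖X m‖ * c, fun n => ?_⟩
  obtain ⟨κ, _, Z, h_sum, hZ⟩ := exists_star_mul_self_pow_eq_sum hA h_left h_right (c := c)
    (fun m => Finset.single_le_sum (f := fun m => √(‖(1 : B)‖ * ‖X m‖))
      (fun _ _ => Real.sqrt_nonneg _) (Finset.mem_univ m)) n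
  calc ‖(star S * S) ^ (n + 1)‖ ≤ ‖star S‖ * ‖S * (star S * S) ^ n‖ := by
        rw [pow_succ', mul_assoc]; exact norm_mul_le _ _
    _ = ‖star S‖ * ‖∑ m, X m * ∑ i, Z i‖ := by rw [h_sum, ← Finset.sum_mul]
    _ ≤ ‖star S‖ * ∑ m, ‖X m * ∑ i, Z i‖ := by gcongr; exact norm_sum_le _ _
    _ ≤ ‖star S‖ * ∑ m, √‖X m‖ * ((A ^ 2) ^ n * c) := by gcongr; exact norm_mul_sum_le (hZ _)
    _ = (‖star S‖ * ∑ m, √‖X m‖ * c) * (A ^ 2) ^ n := by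
        simp only [Finset.mul_sum, Finset.sum_mul]; congr! 1; ring

/-- The high powers of `S⋆S` defeat the number of summands: by the C⋆-identity
`‖S‖ ^ (2 * 2 ^ k) = ‖(S⋆S) ^ 2 ^ k‖`, and the right-hand side is `O((A ^ 2) ^ 2 ^ k)`. -/
theorem cotlar_stein [CStarRing B] (hA : 0 ≤ A)
    (h_left : ∀ k, ∑ l, √‖star (X k) * X l‖ ≤ A) (h_right : ∀ k, ∑ l, √‖X k * star (X l)‖ ≤ A) :
    ‖∑ k, X k‖ ≤ A := by
  refine le_of_forall_gt_imp_ge_of_dense fun A' hA' => ?_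
  have hA'_pos : 0 < A' := hA.trans_lt hA'
  obtain ⟨C, hC⟩ := exists_norm_star_mul_self_pow_succ_le hA'_pos.le
    (fun k => (h_left k).trans hA'.le) (fun k => (h_right k).trans hA'.le)
  set S := ∑ k, X k
  suffices h_sq : ‖S‖ ^ 2 ≤ A' ^ 2 from (sq_le_sq₀ (norm_nonneg _) hA'_pos.le).1 h_sq
  refine le_of_pow_two_pow_le_mul (c := C / A' ^ 2) (by positivity) fun k => ?_
  obtain ⟨n, hn⟩ : ∃ n, 2 ^ k = n + 1 := Nat.exists_eq_add_one.2 (by positivity)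
  calc (‖S‖ ^ 2) ^ 2 ^ k = ‖(star S * S) ^ 2 ^ k‖ := by
        rw [(IsSelfAdjoint.star_mul_self S).norm_pow_two_pow, CStarRing.norm_star_mul_self, sq]
    _ ≤ C * (A' ^ 2) ^ n := by rw [hn]; exact hC n
    _ = C / A' ^ 2 * (A' ^ 2) ^ 2 ^ k := by rw [hn, pow_succ (A' ^ 2)]; field_simp

end CotlarStein

section AlmostOrthogonality

/-! ### Almost orthogonal families in C⋆-rings -/

/-- A symmetric weight `ω` on an index set, normalized to be `1` on the diagonal and with row sums
at most `Z`; it measures the decay of interactions between the members of a family. -/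
structure IsInteractionWeight {ι : Type*} [Fintype ι] (ω : ι → ι → ℝ) (Z : ℝ) : Prop where
  pos : ∀ j k, 0 < ω j k
  le_one : ∀ j k, ω j k ≤ 1
  self : ∀ j, ω j j = 1
  symm : ∀ j k, ω j k = ω k j
  sum_le : ∀ j, ∑ k, ω j k ≤ Z

theorem le_of_le_of_le_of_mul_eq_sq {x a b c : ℝ} (hx : 0 ≤ x) (hc : 0 ≤ c) (ha : x ≤ a)
    (hb : x ≤ b) (h_mul : a * b = c ^ 2) : x ≤ c := by
  refine (sq_le_sq₀ hx hc).1 ?_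
  rw [← h_mul, sq]
  exact mul_le_mul ha hb hx (hx.trans ha)

theorem sqrt_le_of_le_of_le {x M δ w v : ℝ} (hx : 0 ≤ x) (hM : 0 ≤ M) (hδ : 0 ≤ δ) (hw : 0 ≤ w)
    (hv : 0 ≤ v) (h₁ : x ≤ M * δ ^ 4 * w ^ 4) (h₂ : x ≤ M * v ^ 4) : √x ≤ √M * δ * (w * v) := by
  have h_mean : x ≤ M * (δ * (w * v)) ^ 2 :=
    le_of_le_of_le_of_mul_eq_sq hx (by positivity) h₁ h₂ (by ring)
  calc √x ≤ √(M * (δ * (w * v)) ^ 2) := Real.sqrt_le_sqrt h_mean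
    _ = √M * δ * (w * v) := by rw [Real.sqrt_mul hM, Real.sqrt_sq (by positivity), mul_assoc]

variable {ι : Type*} [Fintype ι] {ω : ι → ι → ℝ} {M K δ Z : ℝ}

namespace IsInteractionWeight

theorem sum_sum_mul_le (hω : IsInteractionWeight ω Z) (j : ι) :
    ∑ k, ∑ l, ω k l * ω j k ≤ Z ^ 2 := by
  have hZ : 0 ≤ Z := (Finset.sum_nonneg fun k _ => (hω.pos j k).le).trans (hω.sum_le j)
  calc ∑ k, ∑ l, ω k l * ω j k ≤ ∑ k, Z * ω j k := by
        gcongr with k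
        rw [← Finset.sum_mul]
        exact mul_le_mul_of_nonneg_right (hω.sum_le k) (hω.pos j k).le
    _ ≤ Z ^ 2 := by rw [← Finset.mul_sum, sq]; gcongr; exact hω.sum_le j

variable {B : Type*} [NormedRing B] [StarRing B] [CStarRing B]

theorem norm_sum_sum_le {X : ι → ι → B} (hω : IsInteractionWeight ω Z) (hM : 0 ≤ M) (hδ : 0 ≤ δ)
    (h_small : ∀ j k j' k', ‖X j k‖ * ‖X j' k'‖ ≤ M * δ ^ 4 * ω j' k' ^ 4)
    (h_left : ∀ j k j' k', ‖star (X j k) * X j' k'‖ ≤ M * ω j j' ^ 4)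
    (h_right : ∀ j k j' k', ‖X j k * star (X j' k')‖ ≤ M * ω k k' ^ 4) :
    ‖∑ j, ∑ k, X j k‖ ≤ √M * δ * Z ^ 2 := by
  rw [← Fintype.sum_prod_type' X]
  have h_pos (j k : ι) : 0 ≤ ω j k := (hω.pos j k).le
  refine cotlar_stein (X := fun p : ι × ι => X p.1 p.2) (by positivity) (fun p => ?_) (fun p => ?_)
  · calc ∑ q : ι × ι, √‖star (X p.1 p.2) * X q.1 q.2‖
        ≤ ∑ q : ι × ι, √M * δ * (ω q.1 q.2 * ω p.1 q.1) := by
          gcongr with q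
          refine sqrt_le_of_le_of_le (norm_nonneg _) hM hδ (h_pos _ _) (h_pos _ _) ?_
            (h_left _ _ _ _)
          exact (norm_mul_le _ _).trans (by rw [norm_star]; exact h_small _ _ _ _)
      _ = √M * δ * ∑ j, ∑ k, ω j k * ω p.1 j := by rw [← Finset.mul_sum, Fintype.sum_prod_type]
      _ ≤ √M * δ * Z ^ 2 := by gcongr; exact hω.sum_sum_mul_le _
  · calc ∑ q : ι × ι, √‖X p.1 p.2 * star (X q.1 q.2)‖
        ≤ ∑ q : ι × ι, √M * δ * (ω q.1 q.2 * ω p.2 q.2) := by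
          gcongr with q
          refine sqrt_le_of_le_of_le (norm_nonneg _) hM hδ (h_pos _ _) (h_pos _ _) ?_
            (h_right _ _ _ _)
          exact (norm_mul_le _ _).trans (by rw [norm_star]; exact h_small _ _ _ _)
      _ = √M * δ * ∑ k, ∑ j, ω k j * ω p.2 k := by
          rw [← Finset.mul_sum, Fintype.sum_prod_type_right]
          simp only [hω.symm _ _]
      _ ≤ √M * δ * Z ^ 2 := by gcongr; exact hω.sum_sum_mul_le _

end IsInteractionWeight

variable [DecidableEq ι] {B : Type*} [NormedRing B] {P T : ι → B}

/-- The deviation of `P j * T k` from `δ_{jk} T k`, the value it would have if the `P j` were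
mutually orthogonal projections with `P j` fixing `T j`. -/
def localizationDefect (P T : ι → B) (j k : ι) : B :=
  P j * T k - if j = k then T k else 0

theorem mul_sum_sub_eq_sum_localizationDefect (j : ι) :
    P j * ∑ k, T k - T j = ∑ k, localizationDefect P T j k := by
  simp only [localizationDefect, Finset.sum_sub_distrib, Finset.mul_sum, Finset.sum_ite_eq,
    Finset.mem_univ, if_true]

theorem one_sub_sum_mul_sum_eq_neg_sum_localizationDefect :
    (1 - ∑ j, P j) * ∑ k, T k = -∑ j, ∑ k, localizationDefect P T j k := by
  simp only [← mul_sum_sub_eq_sum_localizationDefect, Finset.sum_sub_distrib, ← Finset.sum_mul]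
  noncomm_ring

variable [StarRing B]

/-- The families `P`, `T` consist of self-adjoint elements with interactions controlled by the
weight `ω`, and `P` localizes `T` up to an error governed by `δ`. -/
structure AlmostLocalizes (ω : ι → ι → ℝ) (P T : ι → B) (K δ : ℝ) : Prop where
  one_le : 1 ≤ K
  pos : 0 < δ
  le_one : δ ≤ 1
  isSelfAdjoint_left : ∀ j, IsSelfAdjoint (P j)
  isSelfAdjoint_right : ∀ j, IsSelfAdjoint (T j)
  norm_left_mul_left_le : ∀ j k, ‖P j * P k‖ ≤ K * ω j k ^ 4
  norm_left_mul_right_le : ∀ j k, ‖P j * T k‖ ≤ K * ω j k ^ 4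
  norm_right_mul_right_le : ∀ j k, ‖T j * T k‖ ≤ K * ω j k ^ 4
  norm_defect_le : ∀ j k, ‖localizationDefect P T j k‖ ≤ K * δ ^ 4 * ω j k ^ 4

theorem norm_le_of_norm_mul_self_le [CStarRing B] {x : B} (hx : IsSelfAdjoint x)
    (hK : 1 ≤ K) (h : ‖x * x‖ ≤ K) : ‖x‖ ≤ K := by
  rw [hx.norm_mul_self] at h
  nlinarith [norm_nonneg x]

namespace AlmostLocalizes

theorem norm_mul_sum_sub_le (h : AlmostLocalizes ω P T K δ) (hω : IsInteractionWeight ω Z)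
    (j : ι) : ‖P j * ∑ k, T k - T j‖ ≤ K * Z * δ := by
  have hK := h.one_le
  have hδ := h.pos
  rw [mul_sum_sub_eq_sum_localizationDefect]
  calc ‖∑ k, localizationDefect P T j k‖ ≤ ∑ k, K * δ ^ 4 * ω j k ^ 4 :=
        norm_sum_le_of_le _ fun k _ => h.norm_defect_le j k
    _ ≤ ∑ k, K * δ * ω j k := by
        gcongr with k
        exacts [pow_le_of_le_one hδ.le h.le_one four_ne_zero,
          pow_le_of_le_one (hω.pos j k).le (hω.le_one j k) four_ne_zero]
    _ ≤ K * δ * Z := by rw [← Finset.mul_sum]; gcongr; exact hω.sum_le j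
    _ = K * Z * δ := by ring

variable [CStarRing B]

theorem norm_left_le (h : AlmostLocalizes ω P T K δ) (hω : IsInteractionWeight ω Z) (j : ι) :
    ‖P j‖ ≤ K :=
  norm_le_of_norm_mul_self_le (h.isSelfAdjoint_left j) h.one_le <| by
    simpa [hω.self] using h.norm_left_mul_left_le j j

theorem norm_right_le (h : AlmostLocalizes ω P T K δ) (hω : IsInteractionWeight ω Z) (j : ι) :
    ‖T j‖ ≤ K :=
  norm_le_of_norm_mul_self_le (h.isSelfAdjoint_right j) h.one_le <| by
    simpa [hω.self] using h.norm_right_mul_right_le j j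

theorem norm_right_mul_left_le (h : AlmostLocalizes ω P T K δ) (hω : IsInteractionWeight ω Z)
    (j k : ι) : ‖T j * P k‖ ≤ K * ω j k ^ 4 := by
  rw [← norm_star, star_mul, (h.isSelfAdjoint_left k).star_eq, (h.isSelfAdjoint_right j).star_eq,
    hω.symm]
  exact h.norm_left_mul_right_le k j

theorem norm_star_defect_mul_defect_le (h : AlmostLocalizes ω P T K δ)
    (hω : IsInteractionWeight ω Z) (j k j' k' : ι) :
    ‖star (localizationDefect P T j k) * localizationDefect P T j' k'‖ ≤
      4 * K ^ 3 * ω j j' ^ 4 := by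
  have hK := h.one_le
  have hω_pos := hω.pos j j'
  set e : B := if j = k then T k else 0 with he
  set e' : B := if j' = k' then T k' else 0 with he'
  have he_star : star e = e := by
    rw [he]; split_ifs
    exacts [h.isSelfAdjoint_right k, star_zero _]
  have h_expand : star (localizationDefect P T j k) * localizationDefect P T j' k' =
      T k * (P j * P j') * T k' - T k * (P j * e') - e * P j' * T k' + e * e' := by
    rw [localizationDefect, localizationDefect, ← he, ← he', star_sub, star_mul,
      (h.isSelfAdjoint_left j).star_eq, (h.isSelfAdjoint_right k).star_eq, he_star]
    noncomm_ring
  have h_Pe : ‖P j * e'‖ ≤ K * ω j j' ^ 4 := by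
    rw [he']; split_ifs with hjk'
    · exact hjk' ▸ h.norm_left_mul_right_le j j'
    · rw [mul_zero, norm_zero]; positivity
  have h_eP : ‖e * P j'‖ ≤ K * ω j j' ^ 4 := by
    rw [he]; split_ifs with hjk
    · exact hjk ▸ h.norm_right_mul_left_le hω j j'
    · rw [zero_mul, norm_zero]; positivity
  have h_ee : ‖e * e'‖ ≤ K * ω j j' ^ 4 := by
    rw [he, he']; split_ifs with hjk hjk' hjk'
    · exact hjk ▸ hjk' ▸ h.norm_right_mul_right_le j j'
    all_goals simp only [mul_zero, zero_mul, norm_zero]; positivity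
  calc _ ≤ ‖T k‖ * ‖P j * P j'‖ * ‖T k'‖ + ‖T k‖ * ‖P j * e'‖ + ‖e * P j'‖ * ‖T k'‖ +
          ‖e * e'‖ := by
        rw [h_expand]
        refine (norm_add_le_of_le (norm_sub_le_of_le (norm_sub_le_of_le ?_ ?_) ?_) le_rfl)
        exacts [norm_mul₃_le, norm_mul_le _ _, norm_mul_le _ _]
    _ ≤ K * (K * ω j j' ^ 4) * K + K * (K * ω j j' ^ 4) + K * ω j j' ^ 4 * K + K * ω j j' ^ 4 := by
        gcongr
        exacts [h.norm_right_le hω k, h.norm_left_mul_left_le j j', h.norm_right_le hω k',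
          h.norm_right_le hω k, h.norm_right_le hω k']
    _ = (K ^ 3 + K ^ 2 + K ^ 2 + K) * ω j j' ^ 4 := by ring
    _ ≤ 4 * K ^ 3 * ω j j' ^ 4 := by
        gcongr
        nlinarith [pow_le_pow_right₀ hK (show 2 ≤ 3 by norm_num), le_self_pow₀ hK three_ne_zero]

theorem norm_defect_mul_star_defect_le (h : AlmostLocalizes ω P T K δ)
    (hω : IsInteractionWeight ω Z) (j k j' k' : ι) :
    ‖localizationDefect P T j k * star (localizationDefect P T j' k')‖ ≤
      4 * K ^ 3 * ω k k' ^ 4 := by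
  have hK := h.one_le
  have hω_pos := hω.pos k k'
  have h_one : ‖(1 : B)‖ ≤ 1 := by
    rcases subsingleton_or_nontrivial B with hB | hB
    · rw [Subsingleton.elim (1 : B) 0, norm_zero]; exact zero_le_one
    · exact CStarRing.norm_one.le
  have h_factor (j k : ι) : ∃ R : B, ‖R‖ ≤ 2 * K ∧ localizationDefect P T j k = R * T k := by
    refine ⟨P j - if j = k then 1 else 0, ?_, by simp [localizationDefect, sub_mul]⟩
    have h_ite : ‖(if j = k then 1 else 0 : B)‖ ≤ 1 := by split_ifs <;> simp [h_one]
    exact (norm_sub_le_of_le (h.norm_left_le hω j) h_ite).trans (by linarith)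
  obtain ⟨R, hR, hR_eq⟩ := h_factor j k
  obtain ⟨R', hR', hR'_eq⟩ := h_factor j' k'
  rw [hR_eq, hR'_eq, star_mul, (h.isSelfAdjoint_right k').star_eq]
  calc ‖R * T k * (T k' * star R')‖ ≤ ‖R‖ * ‖T k * T k'‖ * ‖R'‖ := by
        rw [← norm_star R', show R * T k * (T k' * star R') = R * (T k * T k') * star R' by
          simp only [mul_assoc]]
        exact norm_mul₃_le
    _ ≤ (2 * K) * (K * ω k k' ^ 4) * (2 * K) := by gcongr; exact h.norm_right_mul_right_le k k'
    _ = 4 * K ^ 3 * ω k k' ^ 4 := by ring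

theorem norm_one_sub_sum_mul_sum_le (h : AlmostLocalizes ω P T K δ)
    (hω : IsInteractionWeight ω Z) :
    ‖(1 - ∑ j, P j) * ∑ k, T k‖ ≤ √(4 * K ^ 3) * Z ^ 2 * δ := by
  have hK := h.one_le
  have hδ := h.pos
  have h_small (j k j' k' : ι) :
      ‖localizationDefect P T j k‖ * ‖localizationDefect P T j' k'‖ ≤
        4 * K ^ 3 * δ ^ 4 * ω j' k' ^ 4 := by
    have h_le : ‖localizationDefect P T j k‖ ≤ K := by
      refine (h.norm_defect_le j k).trans ?_
      rw [mul_assoc]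
      exact mul_le_of_le_one_right (by positivity) (mul_le_one₀ (pow_le_one₀ hδ.le h.le_one)
        (pow_nonneg (hω.pos j k).le 4) (pow_le_one₀ (hω.pos j k).le (hω.le_one j k)))
    calc _ ≤ K * (K * δ ^ 4 * ω j' k' ^ 4) := by gcongr; exact h.norm_defect_le j' k'
      _ = K ^ 2 * (δ ^ 4 * ω j' k' ^ 4) := by ring
      _ ≤ 4 * K ^ 3 * (δ ^ 4 * ω j' k' ^ 4) := by
          have := hω.pos j' k'
          gcongr
          nlinarith [pow_le_pow_right₀ hK (show 2 ≤ 3 by norm_num)]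
      _ = 4 * K ^ 3 * δ ^ 4 * ω j' k' ^ 4 := by ring
  rw [one_sub_sum_mul_sum_eq_neg_sum_localizationDefect, norm_neg, mul_right_comm]
  exact hω.norm_sum_sum_le (by positivity) hδ.le h_small
    (h.norm_star_defect_mul_defect_le hω) (h.norm_defect_mul_star_defect_le hω)

end AlmostLocalizes

end AlmostOrthogonality

section Symbols

/-! ### Test symbols and their fibrewise Fourier transforms -/

open scoped FourierTransform ContDiff

/-- A test symbol: a smooth compactly supported function on the phase space `ℝ × ℝ` of
position-frequency pairs. -/
structure IsTestSymbol (b : ℝ × ℝ → ℂ) : Prop where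
  contDiff : ContDiff ℝ ∞ b
  hasCompactSupport : HasCompactSupport b

/-- The translate of a symbol by a phase space vector. -/
def translate (b : ℝ × ℝ → ℂ) (v : ℝ × ℝ) : ℝ × ℝ → ℂ := fun p => b (p - v)

/-- The derivative of a symbol in the position variable. -/
def posDeriv (b : ℝ × ℝ → ℂ) : ℝ × ℝ → ℂ := fun p => fderiv ℝ b p (1, 0)

/-- The derivative of a symbol in the frequency variable, normalized so that it becomes
multiplication by `t` under the fibrewise Fourier transform. -/
def freqDeriv (b : ℝ × ℝ → ℂ) : ℝ × ℝ → ℂ := fun p => I / (2 * Real.pi) * fderiv ℝ b p (0, 1)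

/-- Multiplication of a symbol by `2πi` times the frequency variable; it corresponds to `∂/∂t`
under the fibrewise Fourier transform. -/
def freqMul (b : ℝ × ℝ → ℂ) : ℝ × ℝ → ℂ := fun p => 2 * Real.pi * I * p.2 * b p

/-- The inverse Fourier transform of a symbol in the frequency variable. -/
def fiberFourier (b : ℝ × ℝ → ℂ) (x t : ℝ) : ℂ := 𝓕⁻ (fun η => b (x, η)) t

variable {b c : ℝ × ℝ → ℂ}

theorem posDeriv_translate (b : ℝ × ℝ → ℂ) (v : ℝ × ℝ) :
    posDeriv (translate b v) = translate (posDeriv b) v := by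
  funext p
  exact congrArg (fun L : ℝ × ℝ →L[ℝ] ℂ => L (1, 0)) (fderiv_comp_sub v)

theorem freqDeriv_translate (b : ℝ × ℝ → ℂ) (v : ℝ × ℝ) :
    freqDeriv (translate b v) = translate (freqDeriv b) v := by
  funext p
  exact congrArg (fun L : ℝ × ℝ →L[ℝ] ℂ => I / (2 * Real.pi) * L (0, 1)) (fderiv_comp_sub v)

theorem freqMul_translate (b : ℝ × ℝ → ℂ) (v : ℝ × ℝ) :
    freqMul (translate b v) =
      translate (freqMul b) v + (2 * Real.pi * I * v.2 : ℂ) • translate b v := by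
  funext p
  simp only [freqMul, translate, Pi.add_apply, Pi.smul_apply, smul_eq_mul, Prod.snd_sub, ofReal_sub]
  ring

theorem tsupport_posDeriv_subset (b : ℝ × ℝ → ℂ) : tsupport (posDeriv b) ⊆ tsupport b :=
  tsupport_fderiv_apply_subset ℝ _

theorem tsupport_freqDeriv_subset (b : ℝ × ℝ → ℂ) : tsupport (freqDeriv b) ⊆ tsupport b :=
  tsupport_mul_subset_right.trans (tsupport_fderiv_apply_subset ℝ _)

theorem fiberFourier_eq_integral (b : ℝ × ℝ → ℂ) (x t : ℝ) :
    fiberFourier b x t = ∫ η : ℝ, cexp ((2 * Real.pi * t * η : ℝ) * I) * b (x, η) := by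
  rw [fiberFourier, Real.fourierInv_eq']
  refine integral_congr_ae (.of_forall fun η => ?_)
  simp only [RCLike.inner_apply, conj_trivial, smul_eq_mul, mul_assoc]

theorem fiberFourier_smul (z : ℂ) (b : ℝ × ℝ → ℂ) (x t : ℝ) :
    fiberFourier (z • b) x t = z * fiberFourier b x t := by
  simp only [fiberFourier_eq_integral, ← integral_const_mul, Pi.smul_apply, smul_eq_mul,
    mul_left_comm z]

theorem norm_fiberFourier_translate (b : ℝ × ℝ → ℂ) (v : ℝ × ℝ) (x t : ℝ) :
    ‖fiberFourier (translate b v) x t‖ = ‖fiberFourier b (x - v.1) t‖ := by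
  have h_shift : fiberFourier (translate b v) x t =
      cexp ((2 * Real.pi * t * v.2 : ℝ) * I) * fiberFourier b (x - v.1) t := by
    rw [fiberFourier_eq_integral, fiberFourier_eq_integral, ← integral_const_mul,
      ← integral_sub_right_eq_self (fun η : ℝ => cexp ((2 * Real.pi * t * v.2 : ℝ) * I) *
        (cexp ((2 * Real.pi * t * η : ℝ) * I) * b (x - v.1, η))) v.2]
    refine integral_congr_ae (.of_forall fun η => ?_)
    simp only [translate, ← mul_assoc, ← Complex.exp_add]
    congr 2
    push_cast
    ring
  rw [h_shift, norm_mul, norm_exp_ofReal_mul_I, one_mul]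

namespace IsTestSymbol

protected theorem continuous (hb : IsTestSymbol b) : Continuous b := hb.contDiff.continuous

protected theorem hasFDerivAt (hb : IsTestSymbol b) (p : ℝ × ℝ) : HasFDerivAt b (fderiv ℝ b p) p :=
  (hb.contDiff.differentiable (by simp) p).hasFDerivAt

protected theorem translate (hb : IsTestSymbol b) (v : ℝ × ℝ) : IsTestSymbol (translate b v) :=
  ⟨hb.contDiff.comp (contDiff_id.sub contDiff_const),
    hb.hasCompactSupport.comp_homeomorph (Homeomorph.subRight v)⟩

theorem fderiv_apply (hb : IsTestSymbol b) (v : ℝ × ℝ) :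
    IsTestSymbol fun p => fderiv ℝ b p v :=
  ⟨(hb.contDiff.fderiv_right (m := ∞) (by simp)).clm_apply contDiff_const,
    hb.hasCompactSupport.fderiv_apply ℝ v⟩

protected theorem posDeriv (hb : IsTestSymbol b) : IsTestSymbol (posDeriv b) := hb.fderiv_apply _

protected theorem freqDeriv (hb : IsTestSymbol b) : IsTestSymbol (freqDeriv b) :=
  ⟨contDiff_const.mul (hb.fderiv_apply _).contDiff, (hb.fderiv_apply _).hasCompactSupport.mul_left⟩

protected theorem freqMul (hb : IsTestSymbol b) : IsTestSymbol (freqMul b) :=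
  ⟨(contDiff_const.mul (ofRealCLM.contDiff.comp contDiff_snd)).mul hb.contDiff,
    hb.hasCompactSupport.mul_left⟩

theorem exists_integrable_bound (hb : IsTestSymbol b) :
    ∃ g : ℝ → ℝ, Integrable g ∧ ∀ x η, ‖b (x, η)‖ ≤ g η := by
  obtain ⟨C, hC⟩ := hb.continuous.bounded_above_of_compact_support hb.hasCompactSupport
  have h_compact : IsCompact (Prod.snd '' tsupport b) := hb.hasCompactSupport.image continuous_snd
  refine ⟨(Prod.snd '' tsupport b).indicator fun _ => C,
    (integrable_indicator_iff h_compact.measurableSet).2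
      (integrableOn_const h_compact.measure_lt_top.ne), fun x η => ?_⟩
  by_cases hη : η ∈ Prod.snd '' tsupport b
  · rw [Set.indicator_of_mem hη]; exact hC _
  · have h_notMem : (x, η) ∉ tsupport b := fun h => hη ⟨_, h, rfl⟩
    rw [Set.indicator_of_notMem hη, image_eq_zero_of_notMem_tsupport h_notMem, norm_zero]

theorem integrable_fiber (hb : IsTestSymbol b) (x : ℝ) : Integrable fun η => b (x, η) := by
  obtain ⟨g, hg, hbg⟩ := hb.exists_integrable_bound
  exact hg.mono' (hb.continuous.comp (by fun_prop)).aestronglyMeasurable (.of_forall (hbg x))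

theorem integrable_exp_mul_fiber (hb : IsTestSymbol b) (x t : ℝ) :
    Integrable fun η : ℝ => cexp ((2 * Real.pi * t * η : ℝ) * I) * b (x, η) :=
  (hb.integrable_fiber x).bdd_mul (c := 1) (by fun_prop)
    (.of_forall fun η => (norm_exp_ofReal_mul_I _).le)

theorem fiberFourier_add (hb : IsTestSymbol b) (hc : IsTestSymbol c) (x t : ℝ) :
    fiberFourier (b + c) x t = fiberFourier b x t + fiberFourier c x t := by
  simp only [fiberFourier_eq_integral, Pi.add_apply, mul_add]
  exact integral_add (hb.integrable_exp_mul_fiber x t) (hc.integrable_exp_mul_fiber x t)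

theorem hasFDerivAt_exp_mul_fiber (hb : IsTestSymbol b) (η : ℝ) (p : ℝ × ℝ) :
    HasFDerivAt (fun p : ℝ × ℝ => cexp ((2 * Real.pi * p.2 * η : ℝ) * I) * b (p.1, η))
      ((ContinuousLinearMap.fst ℝ ℝ ℝ).smulRight
          (cexp ((2 * Real.pi * p.2 * η : ℝ) * I) * posDeriv b (p.1, η)) +
        (ContinuousLinearMap.snd ℝ ℝ ℝ).smulRight
          (cexp ((2 * Real.pi * p.2 * η : ℝ) * I) * freqMul b (p.1, η))) p := by
  have h_fiber : HasFDerivAt (fun p : ℝ × ℝ => b (p.1, η))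
      ((fderiv ℝ b (p.1, η)).comp ((ContinuousLinearMap.fst ℝ ℝ ℝ).prod 0)) p :=
    (hb.hasFDerivAt (p.1, η)).comp p (hasFDerivAt_fst.prodMk (hasFDerivAt_const η p))
  have h_phase : HasFDerivAt (fun p : ℝ × ℝ => ((2 * Real.pi * p.2 * η : ℝ) : ℂ) * I) _ p :=
    (ofRealCLM.hasFDerivAt.comp p
      ((hasFDerivAt_snd.const_mul (2 * Real.pi)).mul_const η)).mul_const I
  refine (h_phase.cexp.mul h_fiber).congr_fderiv ?_
  ext
  · simp [posDeriv]
  · simp [freqMul, Prod.mk_zero_zero]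
    ring

theorem hasFDerivAt_fiberFourier (hb : IsTestSymbol b) (p : ℝ × ℝ) :
    HasFDerivAt (fun p : ℝ × ℝ => fiberFourier b p.1 p.2)
      ((ContinuousLinearMap.fst ℝ ℝ ℝ).smulRight (fiberFourier (posDeriv b) p.1 p.2) +
        (ContinuousLinearMap.snd ℝ ℝ ℝ).smulRight (fiberFourier (freqMul b) p.1 p.2)) p := by
  obtain ⟨g, hg, hbg⟩ := hb.posDeriv.exists_integrable_bound
  obtain ⟨g', hg', hbg'⟩ := hb.freqMul.exists_integrable_bound
  have h_fst := (hb.posDeriv.integrable_exp_mul_fiber p.1 p.2)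
  have h_snd := (hb.freqMul.integrable_exp_mul_fiber p.1 p.2)
  have h_int_fst := (ContinuousLinearMap.smulRightL ℝ _ ℂ
    (ContinuousLinearMap.fst ℝ ℝ ℝ)).integrable_comp h_fst
  have h_int_snd := (ContinuousLinearMap.smulRightL ℝ _ ℂ
    (ContinuousLinearMap.snd ℝ ℝ ℝ)).integrable_comp h_snd
  simp only [fiberFourier_eq_integral]
  refine (hasFDerivAt_integral_of_dominated_of_fderiv_le (bound := fun η => g η + g' η)
    Filter.univ_mem (.of_forall fun q => ?_) (hb.integrable_exp_mul_fiber p.1 p.2)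
    (h_int_fst.add h_int_snd).aestronglyMeasurable (.of_forall fun η q _ => ?_) (hg.add hg')
    (.of_forall fun η q _ => hb.hasFDerivAt_exp_mul_fiber η q)).congr_fderiv ?_
  · exact (hb.integrable_exp_mul_fiber q.1 q.2).aestronglyMeasurable
  · refine norm_add_le_of_le ?_ ?_ <;>
      rw [ContinuousLinearMap.norm_smulRight_apply, norm_mul, norm_exp_ofReal_mul_I, one_mul]
    · exact (mul_le_of_le_one_left (norm_nonneg _) (ContinuousLinearMap.norm_fst_le ..)).trans
        (hbg q.1 η)
    · exact (mul_le_of_le_one_left (norm_nonneg _) (ContinuousLinearMap.norm_snd_le ..)).trans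
        (hbg' q.1 η)
  · refine (integral_add h_int_fst h_int_snd).trans (congrArg₂ (· + ·) ?_ ?_)
    exacts [ContinuousLinearMap.integral_comp_comm _ h_fst,
      ContinuousLinearMap.integral_comp_comm _ h_snd]

theorem continuous_fiberFourier {X : Type*} [TopologicalSpace X] (hb : IsTestSymbol b)
    {x t : X → ℝ} (hx : Continuous x) (ht : Continuous t) :
    Continuous fun s => fiberFourier b (x s) (t s) :=
  (continuous_iff_continuousAt.2 fun p =>
    (hb.hasFDerivAt_fiberFourier p).continuousAt).comp₂ hx ht

theorem hasDerivAt_fiberFourier (hb : IsTestSymbol b) {x t : ℝ → ℝ} {x' t' s : ℝ}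
    (hx : HasDerivAt x x' s) (ht : HasDerivAt t t' s) :
    HasDerivAt (fun s => fiberFourier b (x s) (t s))
      (x' * fiberFourier (posDeriv b) (x s) (t s) + t' * fiberFourier (freqMul b) (x s) (t s))
      s := by
  have h_comp := (hb.hasFDerivAt_fiberFourier (x s, t s)).comp_hasDerivAt s (hx.prodMk ht)
  exact HasDerivAt.congr_deriv h_comp (by simp)

theorem fiberFourier_freqDeriv (hb : IsTestSymbol b) (x t : ℝ) :
    fiberFourier (freqDeriv b) x t = t * fiberFourier b x t := by
  have h_fiber (η : ℝ) : HasDerivAt (fun η => b (x, η)) (fderiv ℝ b (x, η) (0, 1)) η :=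
    (hb.hasFDerivAt (x, η)).comp_hasDerivAt η ((hasDerivAt_const η x).prodMk (hasDerivAt_id η))
  have h_deriv : deriv (fun η => b (x, η)) = fun η => fderiv ℝ b (x, η) (0, 1) :=
    funext fun η => (h_fiber η).deriv
  have h_fourier : fiberFourier (fun p => fderiv ℝ b p (0, 1)) x t =
      -(2 * Real.pi * I * t) * fiberFourier b x t := by
    rw [fiberFourier, fiberFourier, Real.fourierInv_eq_fourier_neg, Real.fourierInv_eq_fourier_neg,
      ← h_deriv, Real.fourier_deriv (hb.integrable_fiber x)
        (fun η => (h_fiber η).differentiableAt)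
        (h_deriv ▸ (hb.fderiv_apply (0, 1)).integrable_fiber x)]
    simp
  calc fiberFourier (freqDeriv b) x t
      = I / (2 * Real.pi) * fiberFourier (fun p => fderiv ℝ b p (0, 1)) x t :=
        fiberFourier_smul (I / (2 * Real.pi)) (fun p => fderiv ℝ b p (0, 1)) x t
    _ = -(I * I) * (t * fiberFourier b x t) := by rw [h_fourier]; field_simp
    _ = t * fiberFourier b x t := by rw [I_mul_I, neg_neg, one_mul]

theorem exists_norm_fiberFourier_le (hb : IsTestSymbol b) :
    ∃ C, ∀ x t, ‖fiberFourier b x t‖ ≤ C := by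
  obtain ⟨g, hg, hbg⟩ := hb.exists_integrable_bound
  refine ⟨∫ η, g η, fun x t => ?_⟩
  rw [fiberFourier_eq_integral]
  refine norm_integral_le_of_norm_le hg (.of_forall fun η => ?_)
  rw [norm_mul, norm_exp_ofReal_mul_I, one_mul]
  exact hbg x η

theorem exists_pow_mul_norm_fiberFourier_le (hb : IsTestSymbol b) (p : ℕ) :
    ∃ C, 0 ≤ C ∧ ∀ x t : ℝ, (1 + t ^ 2) ^ p * ‖fiberFourier b x t‖ ≤ C := by
  induction p generalizing b with
  | zero =>
    obtain ⟨C, hC⟩ := hb.exists_norm_fiberFourier_le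
    exact ⟨C, (norm_nonneg _).trans (hC 0 0), by simpa using hC⟩
  | succ p ih =>
    obtain ⟨C, hC, h_le⟩ := ih hb
    obtain ⟨C', hC', h_le'⟩ := ih hb.freqDeriv.freqDeriv
    refine ⟨C + C', add_nonneg hC hC', fun x t => ?_⟩
    have h_sq : ‖fiberFourier (freqDeriv (freqDeriv b)) x t‖ = t ^ 2 * ‖fiberFourier b x t‖ := by
      rw [hb.freqDeriv.fiberFourier_freqDeriv, hb.fiberFourier_freqDeriv, ← mul_assoc, ← sq,
        norm_mul, norm_pow, norm_real, Real.norm_eq_abs, sq_abs]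
    calc (1 + t ^ 2) ^ (p + 1) * ‖fiberFourier b x t‖
        = (1 + t ^ 2) ^ p * ‖fiberFourier b x t‖ +
          (1 + t ^ 2) ^ p * ‖fiberFourier (freqDeriv (freqDeriv b)) x t‖ := by rw [h_sq]; ring
      _ ≤ C + C' := add_le_add (h_le x t) (h_le' x t)

theorem integrable_fiberFourier (hb : IsTestSymbol b) (x : ℝ) :
    Integrable (fiberFourier b x) := by
  obtain ⟨C, -, hC⟩ := hb.exists_pow_mul_norm_fiberFourier_le 1
  refine (integrable_inv_one_add_sq.const_mul C).mono'
    (hb.continuous_fiberFourier continuous_const continuous_id).aestronglyMeasurable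
    (.of_forall fun t => ?_)
  rw [← div_eq_mul_inv, le_div_iff₀' (by positivity)]
  simpa using hC x t

theorem fourier_fiberFourier (hb : IsTestSymbol b) (x : ℝ) :
    𝓕 (fiberFourier b x) = fun η => b (x, η) := by
  refine (hb.continuous.comp (by fun_prop : Continuous fun η : ℝ => (x, η))
    ).fourier_fourierInv_eq (hb.integrable_fiber x) ?_
  have h_neg : 𝓕 (fun η => b (x, η)) = fun t => fiberFourier b x (-t) := by
    funext t
    rw [fiberFourier, Real.fourierInv_eq_fourier_neg, neg_neg]
  exact h_neg ▸ (hb.integrable_fiberFourier x).comp_neg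

end IsTestSymbol

end Symbols

section Moyal

/-! ### The Moyal product -/

variable {b c χ a : ℝ × ℝ → ℂ}

/-- The integrand of `moyalFourier`. -/
def moyalIntegrand (b c : ℝ × ℝ → ℂ) (H x t s : ℝ) : ℂ :=
  fiberFourier b (x + H * s / 2) (t - s) * fiberFourier c (x - H * (t - s) / 2) s

/-- The fibrewise Fourier transform of the Moyal product of two symbols, that is of the symbol of
the composition of their Weyl quantizations; here `H = 2πh`. -/
def moyalFourier (b c : ℝ × ℝ → ℂ) (H x t : ℝ) : ℂ := ∫ s, moyalIntegrand b c H x t s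

theorem moyalFourier_translate_eq_zero_of_lt {R R' H t : ℝ} {u v : ℝ × ℝ}
    (hb : ∀ x t, R < |x| → fiberFourier b x t = 0) (hc : ∀ x t, R' < |x| → fiberFourier c x t = 0)
    (hH : 0 ≤ H) (h_far : R + R' + H * |t| < |u.1 - v.1|) (x : ℝ) :
    moyalFourier (translate b u) (translate c v) H x t = 0 := by
  refine integral_eq_zero_of_ae (.of_forall fun s => norm_eq_zero.1 ?_)
  rw [moyalIntegrand, norm_mul, norm_fiberFourier_translate, norm_fiberFourier_translate,
    ← norm_mul, norm_eq_zero, mul_eq_zero]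
  by_contra! h_ne
  have h_left := not_lt.1 fun h => h_ne.1 (hb _ (t - s) h)
  have h_right := not_lt.1 fun h => h_ne.2 (hc _ s h)
  refine h_far.not_ge ?_
  calc |u.1 - v.1| = |(x - H * (t - s) / 2 - v.1) - (x + H * s / 2 - u.1) + H * t / 2| := by
        congr 1
        ring
    _ ≤ |x - H * (t - s) / 2 - v.1| + |x + H * s / 2 - u.1| + |H * t / 2| :=
        (abs_add_le _ _).trans (by gcongr; exact abs_sub _ _)
    _ ≤ R + R' + H * |t| := by
        rw [abs_div, abs_mul, abs_of_nonneg hH, abs_two]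
        linarith only [h_left, h_right, mul_nonneg hH (abs_nonneg t)]

theorem one_add_sq_le_two_mul (t s : ℝ) :
    1 + t ^ 2 ≤ 2 * (1 + (t - s) ^ 2) * (1 + s ^ 2) := by
  nlinarith only [sq_nonneg (t - 2 * s), sq_nonneg ((t - s) * s)]

theorem translate_zero (b : ℝ × ℝ → ℂ) : translate b 0 = b := by
  funext p
  rw [translate, sub_zero]

theorem tsupport_translate (b : ℝ × ℝ → ℂ) (v : ℝ × ℝ) :
    tsupport (translate b v) = (fun p => p - v) ⁻¹' tsupport b :=
  tsupport_comp_eq_preimage b (Homeomorph.subRight v)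

namespace IsTestSymbol

theorem exists_pow_mul_norm_moyalIntegrand_le (hb : IsTestSymbol b) (hc : IsTestSymbol c)
    (p : ℕ) : ∃ C, 0 ≤ C ∧ ∀ u v H x t s,
      (1 + t ^ 2) ^ p * ‖moyalIntegrand (translate b u) (translate c v) H x t s‖ ≤
        C * (1 + s ^ 2)⁻¹ := by
  obtain ⟨C, hC, h_le⟩ := hb.exists_pow_mul_norm_fiberFourier_le p
  obtain ⟨C', hC', h_le'⟩ := hc.exists_pow_mul_norm_fiberFourier_le (p + 1)
  refine ⟨2 ^ p * C * C', by positivity, fun u v H x t s => ?_⟩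
  rw [moyalIntegrand, norm_mul, norm_fiberFourier_translate, norm_fiberFourier_translate,
    ← div_eq_mul_inv, le_div_iff₀ (by positivity)]
  set X := ‖fiberFourier b (x + H * s / 2 - u.1) (t - s)‖
  set Y := ‖fiberFourier c (x - H * (t - s) / 2 - v.1) s‖
  calc (1 + t ^ 2) ^ p * (X * Y) * (1 + s ^ 2)
      ≤ (2 * (1 + (t - s) ^ 2) * (1 + s ^ 2)) ^ p * (X * Y) * (1 + s ^ 2) := by
        gcongr
        exact one_add_sq_le_two_mul t s
    _ = 2 ^ p * ((1 + (t - s) ^ 2) ^ p * X) * ((1 + s ^ 2) ^ (p + 1) * Y) := by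
        rw [mul_pow, mul_pow]
        ring
    _ ≤ 2 ^ p * C * C' := by
        gcongr
        exacts [h_le _ _, h_le' _ _]

theorem exists_norm_moyalIntegrand_le (hb : IsTestSymbol b) (hc : IsTestSymbol c) :
    ∃ C, ∀ H x t s, ‖moyalIntegrand b c H x t s‖ ≤ C * (1 + s ^ 2)⁻¹ := by
  obtain ⟨C, -, h_le⟩ := hb.exists_pow_mul_norm_moyalIntegrand_le hc 0
  exact ⟨C, fun H x t s => by simpa [translate_zero] using h_le 0 0 H x t s⟩

theorem continuous_moyalIntegrand (hb : IsTestSymbol b) (hc : IsTestSymbol c) (H x t : ℝ) :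
    Continuous (moyalIntegrand b c H x t) :=
  (hb.continuous_fiberFourier (by fun_prop) (by fun_prop)).mul
    (hc.continuous_fiberFourier (by fun_prop) (by fun_prop))

theorem integrable_moyalIntegrand (hb : IsTestSymbol b) (hc : IsTestSymbol c) (H x t : ℝ) :
    Integrable (moyalIntegrand b c H x t) := by
  obtain ⟨C, h_le⟩ := hb.exists_norm_moyalIntegrand_le hc
  exact (integrable_inv_one_add_sq.const_mul C).mono'
    (hb.continuous_moyalIntegrand hc H x t).aestronglyMeasurable (.of_forall (h_le H x t))

theorem exists_pow_mul_norm_moyalFourier_le (hb : IsTestSymbol b) (hc : IsTestSymbol c) (p : ℕ) :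
    ∃ C, 0 ≤ C ∧ ∀ u v H x t,
      (1 + t ^ 2) ^ p * ‖moyalFourier (translate b u) (translate c v) H x t‖ ≤ C := by
  obtain ⟨C, hC, h_le⟩ := hb.exists_pow_mul_norm_moyalIntegrand_le hc p
  refine ⟨C * Real.pi, by positivity, fun u v H x t => ?_⟩
  have h_weight : 0 ≤ (1 + t ^ 2) ^ p := by positivity
  rw [← integral_univ_inv_one_add_sq, ← integral_const_mul, ← Real.norm_of_nonneg h_weight,
    ← norm_real, ← norm_mul, moyalFourier, ← integral_const_mul]
  refine norm_integral_le_of_norm_le (integrable_inv_one_add_sq.const_mul C)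
    (.of_forall fun s => ?_)
  rw [norm_mul, norm_real, Real.norm_of_nonneg h_weight]
  exact h_le u v H x t s

theorem hasDerivAt_moyalIntegrand (hb : IsTestSymbol b) (hc : IsTestSymbol c) (H x t s : ℝ) :
    HasDerivAt (fun H => moyalIntegrand b c H x t s)
      (2⁻¹ * (moyalIntegrand (posDeriv b) (freqDeriv c) H x t s -
        moyalIntegrand (freqDeriv b) (posDeriv c) H x t s)) H := by
  have h_left : HasDerivAt (fun H : ℝ => x + H * s / 2) (s / 2) H := by
    simpa using (((hasDerivAt_id H).mul_const s).div_const 2).const_add x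
  have h_right : HasDerivAt (fun H : ℝ => x - H * (t - s) / 2) (-((t - s) / 2)) H := by
    simpa using (((hasDerivAt_id H).mul_const (t - s)).div_const 2).const_sub x
  refine ((hb.hasDerivAt_fiberFourier h_left (hasDerivAt_const H (t - s))).mul
    (hc.hasDerivAt_fiberFourier h_right (hasDerivAt_const H s))).congr_deriv ?_
  simp only [moyalIntegrand, hb.fiberFourier_freqDeriv, hc.fiberFourier_freqDeriv]
  push_cast
  ring

theorem hasDerivAt_moyalFourier (hb : IsTestSymbol b) (hc : IsTestSymbol c) (H x t : ℝ) :
    HasDerivAt (fun H => moyalFourier b c H x t)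
      (2⁻¹ * (moyalFourier (posDeriv b) (freqDeriv c) H x t -
        moyalFourier (freqDeriv b) (posDeriv c) H x t)) H := by
  obtain ⟨C, h_le⟩ := hb.posDeriv.exists_norm_moyalIntegrand_le hc.freqDeriv
  obtain ⟨C', h_le'⟩ := hb.freqDeriv.exists_norm_moyalIntegrand_le hc.posDeriv
  have h_int := hb.posDeriv.integrable_moyalIntegrand hc.freqDeriv H x t
  have h_int' := hb.freqDeriv.integrable_moyalIntegrand hc.posDeriv H x t
  refine (hasDerivAt_integral_of_dominated_loc_of_deriv_le
    (bound := fun s => 2⁻¹ * (C * (1 + s ^ 2)⁻¹ + C' * (1 + s ^ 2)⁻¹)) Filter.univ_mem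
    (.of_forall fun H => (hb.continuous_moyalIntegrand hc H x t).aestronglyMeasurable)
    (hb.integrable_moyalIntegrand hc H x t)
    ((h_int.sub h_int').const_mul 2⁻¹).aestronglyMeasurable
    (.of_forall fun s σ _ => ?_) (((integrable_inv_one_add_sq.const_mul C).add
      (integrable_inv_one_add_sq.const_mul C')).const_mul 2⁻¹)
    (.of_forall fun s σ _ => hb.hasDerivAt_moyalIntegrand hc σ x t s)).2.congr_deriv ?_
  · rw [norm_mul, norm_inv, Complex.norm_ofNat]
    gcongr
    exact norm_sub_le_of_le (h_le σ x t s) (h_le' σ x t s)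
  · exact (integral_const_mul _ _).trans (congrArg _ (integral_sub h_int h_int'))

theorem moyalFourier_zero (hb : IsTestSymbol b) (hc : IsTestSymbol c) (x t : ℝ) :
    moyalFourier b c 0 x t = fiberFourier (b * c) x t := by
  have h_integrable : Integrable (Function.uncurry fun s η : ℝ =>
      cexp ((2 * Real.pi * (t - s) * η : ℝ) * I) * b (x, η) * fiberFourier c x s) := by
    refine ((hc.integrable_fiberFourier x).mul_prod (hb.integrable_fiber x)).norm.mono'
      (Continuous.aestronglyMeasurable ?_) (.of_forall fun p => ?_)
    · have h_left := hb.continuous.comp (by fun_prop : Continuous fun p : ℝ × ℝ => (x, p.2))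
      have h_right :=
        hc.continuous_fiberFourier (continuous_const (y := x)) (continuous_fst (Y := ℝ))
      exact (Continuous.mul (by fun_prop) h_left).mul h_right
    · rw [Function.uncurry, norm_mul, norm_mul, norm_exp_ofReal_mul_I, one_mul, norm_mul, mul_comm]
  have h_inversion (η : ℝ) : c (x, η) =
      ∫ s : ℝ, cexp ((-(2 * Real.pi * s * η) : ℝ) * I) * fiberFourier c x s := by
    rw [← congrFun (hc.fourier_fiberFourier x) η, Real.fourier_eq']
    refine integral_congr_ae (.of_forall fun s => ?_)
    simp only [RCLike.inner_apply, conj_trivial, smul_eq_mul]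
    congr 4
    ring
  calc moyalFourier b c 0 x t
      = ∫ s : ℝ, ∫ η : ℝ,
          cexp ((2 * Real.pi * (t - s) * η : ℝ) * I) * b (x, η) * fiberFourier c x s := by
        simp only [moyalFourier, moyalIntegrand, zero_mul, zero_div, add_zero, sub_zero,
          fiberFourier_eq_integral b, integral_mul_const]
    _ = ∫ η : ℝ, ∫ s : ℝ,
          cexp ((2 * Real.pi * (t - s) * η : ℝ) * I) * b (x, η) * fiberFourier c x s :=
        integral_integral_swap h_integrable
    _ = fiberFourier (b * c) x t := by
        rw [fiberFourier_eq_integral]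
        refine integral_congr_ae (.of_forall fun η => ?_)
        simp only [Pi.mul_apply, h_inversion η, ← integral_const_mul]
        refine integral_congr_ae (.of_forall fun s => ?_)
        have h_exp : cexp ((2 * Real.pi * (t - s) * η : ℝ) * I) =
            cexp ((2 * Real.pi * t * η : ℝ) * I) * cexp ((-(2 * Real.pi * s * η) : ℝ) * I) := by
          rw [← Complex.exp_add, ← add_mul, ← ofReal_add]
          congr 3
          ring
        simp only [h_exp]
        ring

theorem norm_moyalFourier_sub_fiberFourier_mul_le (hb : IsTestSymbol b) (hc : IsTestSymbol c)
    {H x t D D' : ℝ} (hH : 0 ≤ H)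
    (h_left : ∀ σ, 0 ≤ σ → σ ≤ H →
      (1 + t ^ 2) * ‖moyalFourier (posDeriv b) (freqDeriv c) σ x t‖ ≤ D)
    (h_right : ∀ σ, 0 ≤ σ → σ ≤ H →
      (1 + t ^ 2) * ‖moyalFourier (freqDeriv b) (posDeriv c) σ x t‖ ≤ D') :
    (1 + t ^ 2) * ‖moyalFourier b c H x t - fiberFourier (b * c) x t‖ ≤ (D + D') * H := by
  have h_pos : 0 < 1 + t ^ 2 := by positivity
  have h_mean := norm_image_sub_le_of_norm_deriv_le_segment' (a := 0) (b := H)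
    (C := (D + D') / (1 + t ^ 2))
    (fun σ _ => (hb.hasDerivAt_moyalFourier hc σ x t).hasDerivWithinAt) (fun σ hσ => ?_)
    H ⟨hH, le_rfl⟩
  · rwa [sub_zero, hb.moyalFourier_zero hc, div_mul_eq_mul_div, le_div_iff₀' h_pos] at h_mean
  · rw [le_div_iff₀' h_pos, norm_mul, norm_inv, Complex.norm_ofNat]
    have h_sub := norm_sub_le (moyalFourier (posDeriv b) (freqDeriv c) σ x t)
      (moyalFourier (freqDeriv b) (posDeriv c) σ x t)
    nlinarith [h_left σ hσ.1 hσ.2.le, h_right σ hσ.1 hσ.2.le,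
      norm_nonneg (moyalFourier (posDeriv b) (freqDeriv c) σ x t -
        moyalFourier (freqDeriv b) (posDeriv c) σ x t)]

theorem exists_norm_moyalFourier_le_of_disjoint (hb : IsTestSymbol b) (hc : IsTestSymbol c)
    (N : ℕ) : ∃ C, 0 ≤ C ∧ ∀ u v,
      Disjoint (tsupport (translate b u)) (tsupport (translate c v)) → ∀ H x t, 0 ≤ H →
        (1 + t ^ 2) * ‖moyalFourier (translate b u) (translate c v) H x t‖ ≤ C * H ^ N := by
  induction N generalizing b c with
  | zero =>
    obtain ⟨C, hC, h_le⟩ := hb.exists_pow_mul_norm_moyalFourier_le hc 1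
    exact ⟨C, hC, fun u v _ H x t _ => by simpa using h_le u v H x t⟩
  | succ N ih =>
    obtain ⟨C, hC, h_le⟩ := ih hb.posDeriv hc.freqDeriv
    obtain ⟨C', hC', h_le'⟩ := ih hb.freqDeriv hc.posDeriv
    simp only [← posDeriv_translate, ← freqDeriv_translate] at h_le h_le'
    refine ⟨C + C', add_nonneg hC hC', fun u v h_disj H x t hH => ?_⟩
    have h_zero : fiberFourier (translate b u * translate c v) x t = 0 := by
      have h_mul : translate b u * translate c v = 0 := by
        refine Function.support_eq_empty_iff.1 ((Function.support_mul _ _).trans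
          (h_disj.mono (subset_tsupport _) (subset_tsupport _)).inter_eq)
      simp [h_mul, fiberFourier_eq_integral]
    have h_mean := (hb.translate u).norm_moyalFourier_sub_fiberFourier_mul_le (hc.translate v)
      (x := x) (t := t) (D := C * H ^ N) (D' := C' * H ^ N) hH
      (fun σ hσ hσH => (h_le u v (h_disj.mono (tsupport_posDeriv_subset _)
        (tsupport_freqDeriv_subset _)) σ x t hσ).trans (by gcongr))
      (fun σ hσ hσH => (h_le' u v (h_disj.mono (tsupport_freqDeriv_subset _)
        (tsupport_posDeriv_subset _)) σ x t hσ).trans (by gcongr))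
    rwa [h_zero, sub_zero, ← add_mul, mul_assoc, ← pow_succ] at h_mean

theorem exists_norm_moyalFourier_sub_le_of_disjoint (hχ : IsTestSymbol χ) (ha : IsTestSymbol a)
    (h_one : Disjoint (tsupport (χ - 1)) (tsupport a)) (N : ℕ) :
    ∃ C, 0 ≤ C ∧ ∀ u H x t, 0 ≤ H →
      (1 + t ^ 2) * ‖moyalFourier (translate χ u) (translate a u) H x t -
        fiberFourier (translate a u) x t‖ ≤ C * H ^ (N + 1) := by
  obtain ⟨C, hC, h_le⟩ := hχ.posDeriv.exists_norm_moyalFourier_le_of_disjoint ha.freqDeriv N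
  obtain ⟨C', hC', h_le'⟩ := hχ.freqDeriv.exists_norm_moyalFourier_le_of_disjoint ha.posDeriv N
  have h_pos : posDeriv χ = posDeriv (χ - 1) := by
    funext p
    exact congrArg (fun L : ℝ × ℝ →L[ℝ] ℂ => L (1, 0)) (fderiv_sub_const (1 : ℂ)).symm
  have h_freq : freqDeriv χ = freqDeriv (χ - 1) := by
    funext p
    exact congrArg (fun L : ℝ × ℝ →L[ℝ] ℂ => I / (2 * Real.pi) * L (0, 1))
      (fderiv_sub_const (1 : ℂ)).symm
  have h_mul (u : ℝ × ℝ) : translate χ u * translate a u = translate a u := by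
    funext p
    by_cases hp : p - u ∈ tsupport a
    · have h_sub : (χ - 1) (p - u) = 0 :=
        image_eq_zero_of_notMem_tsupport (h_one.notMem_of_mem_right hp)
      have h_eq : χ (p - u) = 1 := sub_eq_zero.1 h_sub
      simp only [translate, Pi.mul_apply, h_eq, one_mul]
    · simp only [translate, Pi.mul_apply, image_eq_zero_of_notMem_tsupport hp, mul_zero]
  refine ⟨C + C', add_nonneg hC hC', fun u H x t hH => ?_⟩
  have h_mean := (hχ.translate u).norm_moyalFourier_sub_fiberFourier_mul_le (ha.translate u)
    (x := x) (t := t) (D := C * H ^ N) (D' := C' * H ^ N) hH ?_ ?_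
  · rwa [h_mul, ← add_mul, mul_assoc, ← pow_succ] at h_mean
  · refine fun σ hσ hσH => ?_
    rw [posDeriv_translate, freqDeriv_translate]
    refine (h_le u u ?_ σ x t hσ).trans (by gcongr)
    rw [tsupport_translate, tsupport_translate, h_pos]
    exact (h_one.mono (tsupport_posDeriv_subset _) (tsupport_freqDeriv_subset _)).preimage _
  · refine fun σ hσ hσH => ?_
    rw [posDeriv_translate, freqDeriv_translate]
    refine (h_le' u u ?_ σ x t hσ).trans (by gcongr)
    rw [tsupport_translate, tsupport_translate, h_freq]
    exact (h_one.mono (tsupport_freqDeriv_subset _) (tsupport_posDeriv_subset _)).preimage _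

theorem exists_forall_fiberFourier_eq_zero (hb : IsTestSymbol b) :
    ∃ R, ∀ x t, R < |x| → fiberFourier b x t = 0 := by
  obtain ⟨R, hR⟩ := hb.hasCompactSupport.isBounded.exists_norm_le
  refine ⟨R, fun x t hx => ?_⟩
  have h_zero (η : ℝ) : b (x, η) = 0 := image_eq_zero_of_notMem_tsupport fun h =>
    hx.not_ge ((norm_fst_le (x, η)).trans (hR _ h))
  simp [fiberFourier_eq_integral, h_zero]

theorem exists_pos_weight_mul_norm_moyalFourier_le (hb : IsTestSymbol b) (hc : IsTestSymbol c)
    (H₀ : ℝ) (p : ℕ) : ∃ C, ∀ u v H x t, 0 ≤ H → H ≤ H₀ →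
      (1 + (u.1 - v.1) ^ 2) ^ p *
        ((1 + t ^ 2) * ‖moyalFourier (translate b u) (translate c v) H x t‖) ≤ C := by
  obtain ⟨R, hbR⟩ := hb.exists_forall_fiberFourier_eq_zero
  obtain ⟨R', hcR⟩ := hc.exists_forall_fiberFourier_eq_zero
  obtain ⟨C, hC, h_le⟩ := hb.exists_pow_mul_norm_moyalFourier_le hc (p + 1)
  set K := 1 + 2 * (R + R') ^ 2 + 2 * H₀ ^ 2
  refine ⟨K ^ p * C, fun u v H x t hH hH₀ => ?_⟩
  rcases le_or_gt |u.1 - v.1| (R + R' + H₀ * |t|) with h_near | h_far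
  · have h_weight : 1 + (u.1 - v.1) ^ 2 ≤ K * (1 + t ^ 2) := by
      have h_sq := pow_le_pow_left₀ (abs_nonneg _) h_near 2
      rw [sq_abs] at h_sq
      rw [← sq_abs t]
      nlinarith [sq_nonneg (R + R' - H₀ * |t|), sq_nonneg H₀, sq_nonneg ((R + R') * |t|)]
    calc (1 + (u.1 - v.1) ^ 2) ^ p *
          ((1 + t ^ 2) * ‖moyalFourier (translate b u) (translate c v) H x t‖)
        ≤ (K * (1 + t ^ 2)) ^ p *
          ((1 + t ^ 2) * ‖moyalFourier (translate b u) (translate c v) H x t‖) := by gcongr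
      _ = K ^ p *
          ((1 + t ^ 2) ^ (p + 1) * ‖moyalFourier (translate b u) (translate c v) H x t‖) := by
        rw [mul_pow]
        ring
      _ ≤ K ^ p * C := by
        gcongr
        exact h_le u v H x t
  · rw [moyalFourier_translate_eq_zero_of_lt hbR hcR hH
      (h_far.trans_le' (by gcongr)), norm_zero, mul_zero, mul_zero]
    positivity

theorem fiberFourier_freqMul_translate (hb : IsTestSymbol b) (v : ℝ × ℝ) (x t : ℝ) :
    fiberFourier (freqMul (translate b v)) x t =
      fiberFourier (translate (freqMul b) v) x t +
        2 * Real.pi * I * v.2 * fiberFourier (translate b v) x t := by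
  have h_smul : IsTestSymbol ((2 * Real.pi * I * v.2 : ℂ) • translate b v) :=
    ⟨contDiff_const.smul (hb.translate v).contDiff, (hb.translate v).hasCompactSupport.smul_left⟩
  rw [freqMul_translate, (hb.freqMul.translate v).fiberFourier_add h_smul, fiberFourier_smul]

theorem moyalFourier_freqMul_translate_left (hb : IsTestSymbol b) (hc : IsTestSymbol c)
    (v : ℝ × ℝ) (H x t : ℝ) :
    moyalFourier (freqMul (translate b v)) c H x t =
      moyalFourier (translate (freqMul b) v) c H x t +
        2 * Real.pi * I * v.2 * moyalFourier (translate b v) c H x t := by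
  simp only [moyalFourier, ← integral_const_mul]
  rw [← integral_add ((hb.freqMul.translate v).integrable_moyalIntegrand hc H x t)
    (((hb.translate v).integrable_moyalIntegrand hc H x t).const_mul _)]
  simp only [moyalIntegrand, hb.fiberFourier_freqMul_translate, add_mul, mul_assoc]

theorem moyalFourier_freqMul_translate_right (hb : IsTestSymbol b) (hc : IsTestSymbol c)
    (v : ℝ × ℝ) (H x t : ℝ) :
    moyalFourier b (freqMul (translate c v)) H x t =
      moyalFourier b (translate (freqMul c) v) H x t +
        2 * Real.pi * I * v.2 * moyalFourier b (translate c v) H x t := by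
  simp only [moyalFourier, ← integral_const_mul]
  rw [← integral_add (hb.integrable_moyalIntegrand (hc.freqMul.translate v) H x t)
    ((hb.integrable_moyalIntegrand (hc.translate v) H x t).const_mul _)]
  simp only [moyalIntegrand, hc.fiberFourier_freqMul_translate, mul_add,
    mul_left_comm _ (_ * _ : ℂ)]

theorem hasDerivAt_moyalIntegrand_integrationVar (hb : IsTestSymbol b) (hc : IsTestSymbol c)
    (H x t s : ℝ) :
    HasDerivAt (moyalIntegrand b c H x t)
      (H / 2 * moyalIntegrand (posDeriv b) c H x t s - moyalIntegrand (freqMul b) c H x t s +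
        (H / 2 * moyalIntegrand b (posDeriv c) H x t s + moyalIntegrand b (freqMul c) H x t s))
      s := by
  have h_left : HasDerivAt (fun s : ℝ => x + H * s / 2) (H / 2) s := by
    simpa using (((hasDerivAt_id s).const_mul H).div_const 2).const_add x
  have h_right : HasDerivAt (fun s : ℝ => x - H * (t - s) / 2) (H / 2) s := by
    simpa [neg_div] using ((((hasDerivAt_id s).const_sub t).const_mul H).div_const 2).const_sub x
  refine ((hb.hasDerivAt_fiberFourier h_left ((hasDerivAt_id s).const_sub t)).mul
    (hc.hasDerivAt_fiberFourier h_right (hasDerivAt_id s))).congr_deriv ?_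
  simp only [moyalIntegrand, id]
  push_cast
  ring

theorem moyalFourier_freqMul_sub (hb : IsTestSymbol b) (hc : IsTestSymbol c) (H x t : ℝ) :
    moyalFourier (freqMul b) c H x t - moyalFourier b (freqMul c) H x t =
      H / 2 * (moyalFourier (posDeriv b) c H x t + moyalFourier b (posDeriv c) H x t) := by
  have h_pos_left := (hb.posDeriv.integrable_moyalIntegrand hc H x t).const_mul (H / 2 : ℂ)
  have h_mul_left := hb.freqMul.integrable_moyalIntegrand hc H x t
  have h_pos_right := (hb.integrable_moyalIntegrand hc.posDeriv H x t).const_mul (H / 2 : ℂ)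
  have h_mul_right := hb.integrable_moyalIntegrand hc.freqMul H x t
  have h_parts := integral_eq_zero_of_hasDerivAt_of_integrable
    (hb.hasDerivAt_moyalIntegrand_integrationVar hc H x t)
    ((h_pos_left.sub h_mul_left).add (h_pos_right.add h_mul_right))
    (hb.integrable_moyalIntegrand hc H x t)
  have h_split := (integral_add (h_pos_left.sub h_mul_left) (h_pos_right.add h_mul_right)).trans
    (congrArg₂ (· + ·) (integral_sub h_pos_left h_mul_left) (integral_add h_pos_right h_mul_right))
  rw [integral_const_mul, integral_const_mul] at h_split
  have h_zero := h_split.symm.trans h_parts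
  simp only [moyalFourier]
  linear_combination -h_zero

theorem abs_sub_mul_norm_moyalFourier_le (hb : IsTestSymbol b) (hc : IsTestSymbol c)
    (u v : ℝ × ℝ) {H₀ H : ℝ} (hH : 0 ≤ H) (hH₀ : H ≤ H₀) (x t : ℝ) :
    |u.2 - v.2| * ‖moyalFourier (translate b u) (translate c v) H x t‖ ≤
      ‖moyalFourier (translate (freqMul b) u) (translate c v) H x t‖ +
        ‖moyalFourier (translate b u) (translate (freqMul c) v) H x t‖ +
        H₀ * (‖moyalFourier (translate (posDeriv b) u) (translate c v) H x t‖ +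
          ‖moyalFourier (translate b u) (translate (posDeriv c) v) H x t‖) := by
  have h_parts := (hb.translate u).moyalFourier_freqMul_sub (hc.translate v) H x t
  rw [hb.moyalFourier_freqMul_translate_left (hc.translate v),
    (hb.translate u).moyalFourier_freqMul_translate_right hc, posDeriv_translate,
    posDeriv_translate] at h_parts
  have h_eq : ((2 * Real.pi * (u.2 - v.2) : ℝ) : ℂ) * I *
        moyalFourier (translate b u) (translate c v) H x t =
      moyalFourier (translate b u) (translate (freqMul c) v) H x t -
        moyalFourier (translate (freqMul b) u) (translate c v) H x t +
        (H / 2 : ℝ) * (moyalFourier (translate (posDeriv b) u) (translate c v) H x t +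
          moyalFourier (translate b u) (translate (posDeriv c) v) H x t) := by
    push_cast
    linear_combination h_parts
  have h_norm := congrArg norm h_eq
  rw [norm_mul, norm_mul, norm_I, norm_real, norm_mul, Real.norm_eq_abs (_ - _), mul_one,
    Real.norm_of_nonneg Real.two_pi_pos.le] at h_norm
  have h_two_pi : 1 ≤ 2 * Real.pi := by linarith only [Real.pi_gt_three]
  refine (le_mul_of_one_le_left (by positivity) h_two_pi).trans
    ((mul_assoc _ _ _).symm.trans_le (h_norm.trans_le (norm_add_le_of_le ?_ ?_)))
  · exact (norm_sub_le _ _).trans_eq (add_comm _ _)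
  · rw [norm_mul, norm_real, Real.norm_of_nonneg (by positivity)]
    exact mul_le_mul (by linarith only [hH, hH₀]) (norm_add_le _ _) (norm_nonneg _) (hH.trans hH₀)

theorem exists_freq_weight_mul_norm_moyalFourier_le (hb : IsTestSymbol b) (hc : IsTestSymbol c)
    {H₀ : ℝ} (h_pos : 0 ≤ H₀) (m : ℕ) : ∃ C, ∀ u v H x t, 0 ≤ H → H ≤ H₀ →
      (1 + |u.2 - v.2|) ^ m *
        ((1 + t ^ 2) * ‖moyalFourier (translate b u) (translate c v) H x t‖) ≤ C := by
  induction m generalizing b c with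
  | zero =>
    obtain ⟨C, -, h_le⟩ := hb.exists_pow_mul_norm_moyalFourier_le hc 1
    exact ⟨C, fun u v H x t _ _ => by simpa using h_le u v H x t⟩
  | succ m ih =>
    obtain ⟨C, h_le⟩ := ih hb hc
    obtain ⟨C₁, h_le₁⟩ := ih hb.freqMul hc
    obtain ⟨C₂, h_le₂⟩ := ih hb hc.freqMul
    obtain ⟨C₃, h_le₃⟩ := ih hb.posDeriv hc
    obtain ⟨C₄, h_le₄⟩ := ih hb hc.posDeriv
    refine ⟨C + (C₁ + C₂ + H₀ * (C₃ + C₄)), fun u v H x t hH hH₀ => ?_⟩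
    have h_parts := mul_le_mul_of_nonneg_left
      (hb.abs_sub_mul_norm_moyalFourier_le hc u v hH hH₀ x t)
      (by positivity : 0 ≤ (1 + |u.2 - v.2|) ^ m * (1 + t ^ 2))
    have h₃₄ := mul_le_mul_of_nonneg_left
      (add_le_add (h_le₃ u v H x t hH hH₀) (h_le₄ u v H x t hH hH₀)) h_pos
    linear_combination h_parts + h₃₄ + h_le u v H x t hH hH₀ + h_le₁ u v H x t hH hH₀ +
      h_le₂ u v H x t hH hH₀

end IsTestSymbol

/-- The weight on phase space in which almost orthogonality of distant symbols is measured. -/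
def phaseWeight (v : ℝ × ℝ) : ℝ := (1 + v.1 ^ 2) * (1 + v.2 ^ 2)

theorem IsTestSymbol.exists_phaseWeight_mul_norm_moyalFourier_le (hb : IsTestSymbol b)
    (hc : IsTestSymbol c) {H₀ : ℝ} (h_pos : 0 ≤ H₀) (p : ℕ) :
    ∃ C, 0 ≤ C ∧ ∀ u v H x t, 0 ≤ H → H ≤ H₀ →
      phaseWeight (u - v) ^ p *
        ((1 + t ^ 2) * ‖moyalFourier (translate b u) (translate c v) H x t‖) ≤ C := by
  obtain ⟨C, h_le⟩ := hb.exists_pos_weight_mul_norm_moyalFourier_le hc H₀ (2 * p)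
  obtain ⟨C', h_le'⟩ := hb.exists_freq_weight_mul_norm_moyalFourier_le hc h_pos (4 * p)
  have h_bound (u v : ℝ × ℝ) (H x t : ℝ) (hH : 0 ≤ H) (hH₀ : H ≤ H₀) :
      phaseWeight (u - v) ^ p *
        ((1 + t ^ 2) * ‖moyalFourier (translate b u) (translate c v) H x t‖) ≤ (C + C') / 2 := by
    have h_fst := h_le u v H x t hH hH₀
    have h_snd := h_le' u v H x t hH hH₀
    set X := (1 + t ^ 2) * ‖moyalFourier (translate b u) (translate c v) H x t‖
    have h_sq : (1 + (u.2 - v.2) ^ 2) ^ p ≤ (1 + |u.2 - v.2|) ^ (2 * p) := by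
      rw [pow_mul]
      gcongr
      nlinarith only [sq_abs (u.2 - v.2), abs_nonneg (u.2 - v.2)]
    calc phaseWeight (u - v) ^ p * X
        ≤ (1 + (u.1 - v.1) ^ 2) ^ p * (1 + |u.2 - v.2|) ^ (2 * p) * X := by
          rw [phaseWeight, mul_pow, Prod.fst_sub, Prod.snd_sub]
          gcongr ?_ * ?_ * X
      _ ≤ (((1 + (u.1 - v.1) ^ 2) ^ p) ^ 2 + ((1 + |u.2 - v.2|) ^ (2 * p)) ^ 2) / 2 * X := by
          gcongr
          linarith only [two_mul_le_add_sq ((1 + (u.1 - v.1) ^ 2) ^ p)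
            ((1 + |u.2 - v.2|) ^ (2 * p))]
      _ = ((1 + (u.1 - v.1) ^ 2) ^ (2 * p) * X + (1 + |u.2 - v.2|) ^ (4 * p) * X) / 2 := by ring
      _ ≤ (C + C') / 2 := by gcongr
  have h_nonneg : 0 ≤ (C + C') / 2 :=
    (by unfold phaseWeight; positivity : (0 : ℝ) ≤ _).trans (h_bound 0 0 0 0 0 le_rfl h_pos)
  exact ⟨_, h_nonneg, h_bound⟩

end Moyal

/-! ### Schur kernels and integral operators -/

section IntegralOperators

open scoped ENNReal NNReal

variable {α : Type*} [MeasurableSpace α] {μ : Measure α}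

theorem sq_lintegral_mul_le {k f : α → ℝ≥0∞} (hk : AEMeasurable k μ) (hf : AEMeasurable f μ) :
    (∫⁻ z, k z * f z ∂μ) ^ 2 ≤ (∫⁻ z, k z ∂μ) * ∫⁻ z, k z * f z ^ 2 ∂μ := by
  have h_holder := ENNReal.lintegral_mul_norm_pow_le hk (hk.mul (hf.pow_const 2))
    (p := 1 / 2) (q := 1 / 2) (by positivity) (by positivity) (by norm_num)
  have h_sqrt (x : ℝ≥0∞) : (x ^ 2) ^ (1 / 2 : ℝ) = x := by
    rw [← ENNReal.rpow_natCast, ← ENNReal.rpow_mul]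
    norm_num
  have h_sq (x : ℝ≥0∞) : (x ^ (1 / 2 : ℝ)) ^ 2 = x := by
    rw [← ENNReal.rpow_natCast, ← ENNReal.rpow_mul]
    norm_num
  have h_split (z : α) : k z ^ (1 / 2 : ℝ) * (k z * f z ^ 2) ^ (1 / 2 : ℝ) = k z * f z := by
    rw [← ENNReal.mul_rpow_of_nonneg _ _ (by positivity), ← mul_assoc, ← sq, ← mul_pow, h_sqrt]
  simp only [Pi.mul_apply, h_split] at h_holder
  calc (∫⁻ z, k z * f z ∂μ) ^ 2
      ≤ ((∫⁻ z, k z ∂μ) ^ (1 / 2 : ℝ) * (∫⁻ z, k z * f z ^ 2 ∂μ) ^ (1 / 2 : ℝ)) ^ 2 := by gcongr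
    _ = (∫⁻ z, k z ∂μ) * ∫⁻ z, k z * f z ^ 2 ∂μ := by rw [mul_pow, h_sq, h_sq]

theorem enorm_sq_eq_lintegral (u : Lp ℂ 2 μ) : ‖u‖ₑ ^ 2 = ∫⁻ z, ‖u z‖ₑ ^ 2 ∂μ := by
  have h_eq := eLpNorm_nnreal_pow_eq_lintegral (f := u) (μ := μ) (two_ne_zero (α := ℝ≥0))
  simp only [NNReal.coe_ofNat, ENNReal.coe_ofNat, ENNReal.rpow_ofNat] at h_eq
  rw [Lp.enorm_def, h_eq]

/-- A kernel whose absolute row and column integrals are bounded by `C`, as in Schur's test. -/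
structure IsSchurKernel (μ : Measure α) (K : α → α → ℂ) (C : ℝ≥0) : Prop where
  stronglyMeasurable : StronglyMeasurable (Function.uncurry K)
  lintegral_row_le : ∀ y, ∫⁻ z, ‖K y z‖ₑ ∂μ ≤ C
  lintegral_column_le : ∀ z, ∫⁻ y, ‖K y z‖ₑ ∂μ ≤ C

/-- `T` is the integral operator with kernel `K` on `L²(μ)`. -/
def IsIntegralOperator (K : α → α → ℂ) (T : Lp ℂ 2 μ →L[ℂ] Lp ℂ 2 μ) : Prop :=
  ∀ u : Lp ℂ 2 μ, T u =ᵐ[μ] fun y => ∫ z, K y z * u z ∂μ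

variable {K K₁ K₂ : α → α → ℂ} {C C₁ C₂ : ℝ≥0} {T T₁ T₂ : Lp ℂ 2 μ →L[ℂ] Lp ℂ 2 μ}

theorem IsSchurKernel.stronglyMeasurable_row (hK : IsSchurKernel μ K C) (y : α) :
    StronglyMeasurable (K y) :=
  hK.stronglyMeasurable.comp_measurable measurable_prodMk_left

variable [SFinite μ]

theorem IsSchurKernel.aemeasurable_lintegral_mul (hK : IsSchurKernel μ K C) {f : α → ℝ≥0∞}
    (hf : AEMeasurable f μ) : AEMeasurable (fun y => ∫⁻ z, ‖K y z‖ₑ * f z ∂μ) μ :=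
  AEMeasurable.lintegral_prod_right
    (hK.stronglyMeasurable.enorm.aemeasurable.mul hf.comp_snd)

theorem IsSchurKernel.lintegral_sq_lintegral_mul_le (hK : IsSchurKernel μ K C) {f : α → ℝ≥0∞}
    (hf : AEMeasurable f μ) :
    ∫⁻ y, (∫⁻ z, ‖K y z‖ₑ * f z ∂μ) ^ 2 ∂μ ≤ C ^ 2 * ∫⁻ z, f z ^ 2 ∂μ := by
  have h_meas : AEMeasurable (Function.uncurry fun y z => ‖K y z‖ₑ * f z ^ 2) (μ.prod μ) :=
    hK.stronglyMeasurable.enorm.aemeasurable.mul (hf.pow_const 2).comp_snd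
  calc ∫⁻ y, (∫⁻ z, ‖K y z‖ₑ * f z ∂μ) ^ 2 ∂μ
      ≤ ∫⁻ y, C * ∫⁻ z, ‖K y z‖ₑ * f z ^ 2 ∂μ ∂μ := by
        refine lintegral_mono fun y => ?_
        refine (sq_lintegral_mul_le (hK.stronglyMeasurable_row y).enorm.aemeasurable hf).trans ?_
        gcongr
        exact hK.lintegral_row_le y
    _ = C * ∫⁻ z, (∫⁻ y, ‖K y z‖ₑ ∂μ) * f z ^ 2 ∂μ := by
        rw [lintegral_const_mul' _ _ ENNReal.coe_ne_top, lintegral_lintegral_swap h_meas]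
        congr 2 with z
        exact lintegral_mul_const _
          (hK.stronglyMeasurable.comp_measurable measurable_prodMk_right).enorm
    _ ≤ C * ∫⁻ z, C * f z ^ 2 ∂μ := by
        gcongr with z
        exact hK.lintegral_column_le z
    _ = C ^ 2 * ∫⁻ z, f z ^ 2 ∂μ := by
        rw [lintegral_const_mul' _ _ ENNReal.coe_ne_top, sq, mul_assoc]

theorem IsIntegralOperator.norm_le (hT : IsIntegralOperator K T) (hK : IsSchurKernel μ K C) :
    ‖T‖ ≤ C := by
  refine T.opNorm_le_bound C.2 fun u => ?_
  have h_meas := (Lp.aestronglyMeasurable u).enorm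
  have h_sq : ‖T u‖ₑ ^ 2 ≤ (C * ‖u‖ₑ) ^ 2 := calc
    ‖T u‖ₑ ^ 2 = ∫⁻ y, ‖∫ z, K y z * u z ∂μ‖ₑ ^ 2 ∂μ := by
        rw [enorm_sq_eq_lintegral]
        refine lintegral_congr_ae ?_
        filter_upwards [hT u] with y hy
        rw [hy]
    _ ≤ ∫⁻ y, (∫⁻ z, ‖K y z‖ₑ * ‖u z‖ₑ ∂μ) ^ 2 ∂μ := by
        gcongr with y
        simpa only [enorm_mul] using enorm_integral_le_lintegral_enorm (fun z => K y z * u z)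
    _ ≤ (C * ‖u‖ₑ) ^ 2 := by
        rw [mul_pow, enorm_sq_eq_lintegral]
        exact hK.lintegral_sq_lintegral_mul_le h_meas
  have h_le := (ENNReal.pow_le_pow_left_iff two_ne_zero).1 h_sq
  rw [enorm_eq_nnnorm, enorm_eq_nnnorm] at h_le
  exact_mod_cast h_le

theorem IsSchurKernel.ae_integrable (hK : IsSchurKernel μ K C) (u : Lp ℂ 2 μ) :
    ∀ᵐ y ∂μ, Integrable (fun z => K y z * u z) μ := by
  have h_meas := (Lp.aestronglyMeasurable u).enorm
  have h_top : ∫⁻ y, (∫⁻ z, ‖K y z‖ₑ * ‖u z‖ₑ ∂μ) ^ 2 ∂μ ≠ ∞ := by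
    refine ne_top_of_le_ne_top ?_ (hK.lintegral_sq_lintegral_mul_le h_meas)
    rw [← enorm_sq_eq_lintegral]
    finiteness
  filter_upwards [ae_lt_top' ((hK.aemeasurable_lintegral_mul h_meas).pow_const 2) h_top] with y hy
  refine ⟨(hK.stronglyMeasurable_row y).aestronglyMeasurable.mul (Lp.aestronglyMeasurable u), ?_⟩
  simpa only [HasFiniteIntegral, enorm_mul] using
    (ENNReal.pow_lt_top_iff.1 hy).resolve_right two_ne_zero

theorem IsIntegralOperator.sub (h₁ : IsIntegralOperator K₁ T₁) (h₂ : IsIntegralOperator K₂ T₂)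
    (hK₁ : IsSchurKernel μ K₁ C₁) (hK₂ : IsSchurKernel μ K₂ C₂) :
    IsIntegralOperator (fun y z => K₁ y z - K₂ y z) (T₁ - T₂) := by
  intro u
  filter_upwards [h₁ u, h₂ u, Lp.coeFn_sub (T₁ u) (T₂ u), hK₁.ae_integrable u, hK₂.ae_integrable u]
    with y hy₁ hy₂ h_sub h_int₁ h_int₂
  simp only [_root_.sub_apply, h_sub, Pi.sub_apply, hy₁, hy₂, sub_mul,
    integral_sub h_int₁ h_int₂]

theorem IsSchurKernel.stronglyMeasurable_comp (hK₁ : IsSchurKernel μ K₁ C₁)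
    (hK₂ : IsSchurKernel μ K₂ C₂) :
    StronglyMeasurable (Function.uncurry fun y z => ∫ w, K₁ y w * K₂ w z ∂μ) := by
  refine StronglyMeasurable.integral_prod_right' (f := fun q : (α × α) × α =>
    K₁ q.1.1 q.2 * K₂ q.2 q.1.2) ?_
  exact (hK₁.stronglyMeasurable.comp_measurable (by fun_prop : Measurable fun q : (α × α) × α =>
    (q.1.1, q.2))).mul (hK₂.stronglyMeasurable.comp_measurable
      (by fun_prop : Measurable fun q : (α × α) × α => (q.2, q.1.2)))

theorem lintegral_lintegral_mul_le {f : α → ℝ≥0∞} {k : α → α → ℝ≥0∞} (hf : Measurable f)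
    (hk : Measurable (Function.uncurry k)) {A B : ℝ≥0∞} (h_f : ∫⁻ w, f w ∂μ ≤ A)
    (h_k : ∀ w, ∫⁻ z, k w z ∂μ ≤ B) : ∫⁻ z, ∫⁻ w, f w * k w z ∂μ ∂μ ≤ A * B := by
  have h_meas : Measurable (Function.uncurry fun z w => f w * k w z) :=
    (hf.comp measurable_snd).mul (hk.comp measurable_swap)
  rw [lintegral_lintegral_swap h_meas.aemeasurable]
  calc ∫⁻ w, ∫⁻ z, f w * k w z ∂μ ∂μ
      ≤ ∫⁻ w, f w * B ∂μ := by
        gcongr with w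
        exact (lintegral_const_mul _ hk.of_uncurry_left).trans_le (by gcongr; exact h_k w)
    _ ≤ A * B := by
        rw [lintegral_mul_const _ hf]
        gcongr

theorem IsSchurKernel.comp (hK₁ : IsSchurKernel μ K₁ C₁) (hK₂ : IsSchurKernel μ K₂ C₂) :
    IsSchurKernel μ (fun y z => ∫ w, K₁ y w * K₂ w z ∂μ) (C₁ * C₂) := by
  have h_enorm (y z : α) :
      ‖∫ w, K₁ y w * K₂ w z ∂μ‖ₑ ≤ ∫⁻ w, ‖K₁ y w‖ₑ * ‖K₂ w z‖ₑ ∂μ := by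
    simpa only [enorm_mul] using enorm_integral_le_lintegral_enorm fun w => K₁ y w * K₂ w z
  refine ⟨hK₁.stronglyMeasurable_comp hK₂, fun y => ?_, fun z => ?_⟩
  · push_cast
    exact (lintegral_mono fun z => h_enorm y z).trans (lintegral_lintegral_mul_le
      (hK₁.stronglyMeasurable_row y).enorm (k := fun w z => ‖K₂ w z‖ₑ)
      hK₂.stronglyMeasurable.enorm
      (hK₁.lintegral_row_le y) hK₂.lintegral_row_le)
  · simp only [mul_comm (‖K₁ _ _‖ₑ)] at h_enorm
    push_cast
    rw [mul_comm]
    exact (lintegral_mono fun y => h_enorm y z).trans (lintegral_lintegral_mul_le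
      (hK₂.stronglyMeasurable.comp_measurable measurable_prodMk_right).enorm
      (k := fun w y => ‖K₁ y w‖ₑ) (hK₁.stronglyMeasurable.enorm.comp measurable_swap)
      (hK₂.lintegral_column_le z) hK₁.lintegral_column_le)

theorem IsSchurKernel.ae_integrable_comp (hK₁ : IsSchurKernel μ K₁ C₁)
    (hK₂ : IsSchurKernel μ K₂ C₂) (u : Lp ℂ 2 μ) :
    ∀ᵐ y ∂μ, Integrable (Function.uncurry fun w z => K₁ y w * (K₂ w z * u z)) (μ.prod μ) := by
  have h_meas := (Lp.aestronglyMeasurable u).enorm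
  have h_meas' := hK₂.aemeasurable_lintegral_mul h_meas
  have h_top : ∫⁻ y, (∫⁻ w, ‖K₁ y w‖ₑ * ∫⁻ z, ‖K₂ w z‖ₑ * ‖u z‖ₑ ∂μ ∂μ) ^ 2 ∂μ ≠ ∞ := by
    refine ne_top_of_le_ne_top ?_ ((hK₁.lintegral_sq_lintegral_mul_le h_meas').trans
      (mul_le_mul_right (hK₂.lintegral_sq_lintegral_mul_le h_meas) _))
    rw [← enorm_sq_eq_lintegral]
    finiteness
  filter_upwards [ae_lt_top' ((hK₁.aemeasurable_lintegral_mul h_meas').pow_const 2) h_top]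
    with y hy
  have h_aesm : AEStronglyMeasurable (Function.uncurry fun w z => K₁ y w * (K₂ w z * u z))
      (μ.prod μ) :=
    ((hK₁.stronglyMeasurable_row y).aestronglyMeasurable.comp_fst).mul
      (hK₂.stronglyMeasurable.aestronglyMeasurable.mul (Lp.aestronglyMeasurable u).comp_snd)
  refine ⟨h_aesm, ?_⟩
  rw [HasFiniteIntegral, lintegral_prod _ h_aesm.enorm]
  simp only [Function.uncurry, enorm_mul, lintegral_const_mul' _ _ enorm_ne_top]
  exact (ENNReal.pow_lt_top_iff.1 hy).resolve_right two_ne_zero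

theorem IsIntegralOperator.comp (h₁ : IsIntegralOperator K₁ T₁) (h₂ : IsIntegralOperator K₂ T₂)
    (hK₁ : IsSchurKernel μ K₁ C₁) (hK₂ : IsSchurKernel μ K₂ C₂) :
    IsIntegralOperator (fun y z => ∫ w, K₁ y w * K₂ w z ∂μ) (T₁ ∘L T₂) := by
  intro u
  filter_upwards [h₁ (T₂ u), hK₁.ae_integrable_comp hK₂ u] with y hy h_int
  calc (T₁ ∘L T₂) u y = ∫ w, K₁ y w * T₂ u w ∂μ := hy
    _ = ∫ w, ∫ z, K₁ y w * (K₂ w z * u z) ∂μ ∂μ := by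
        refine integral_congr_ae ?_
        filter_upwards [h₂ u] with w hw
        rw [hw, integral_const_mul]
    _ = ∫ z, ∫ w, K₁ y w * (K₂ w z * u z) ∂μ ∂μ := integral_integral_swap h_int
    _ = ∫ z, (∫ w, K₁ y w * K₂ w z ∂μ) * u z ∂μ := by
        simp only [← mul_assoc, integral_mul_const]

theorem IsSchurKernel.integrable_conj_mul (hK : IsSchurKernel μ K C) (u v : Lp ℂ 2 μ) :
    Integrable (Function.uncurry fun y z => starRingEnd ℂ (K y z * u z) * v y) (μ.prod μ) := by
  have h_u := (Lp.aestronglyMeasurable u).enorm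
  have h_v := (Lp.aestronglyMeasurable v).enorm
  have h_aesm : AEStronglyMeasurable
      (Function.uncurry fun y z => starRingEnd ℂ (K y z * u z) * v y) (μ.prod μ) :=
    (Complex.continuous_conj.comp_aestronglyMeasurable
      (hK.stronglyMeasurable.aestronglyMeasurable.mul (Lp.aestronglyMeasurable u).comp_snd)).mul
      (Lp.aestronglyMeasurable v).comp_fst
  refine ⟨h_aesm, ?_⟩
  rw [HasFiniteIntegral, lintegral_prod _ h_aesm.enorm]
  simp only [Function.uncurry, enorm_mul, RCLike.enorm_conj,
    lintegral_mul_const' _ _ enorm_ne_top]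
  refine (ENNReal.lintegral_mul_le_Lp_mul_Lq μ Real.HolderConjugate.two_two
    (hK.aemeasurable_lintegral_mul h_u) h_v).trans_lt ?_
  simp only [ENNReal.rpow_ofNat]
  have h_row := hK.lintegral_sq_lintegral_mul_le h_u
  rw [← enorm_sq_eq_lintegral] at h_row ⊢
  have h_top := ne_top_of_le_ne_top (by finiteness) h_row
  finiteness

theorem IsIntegralOperator.isSelfAdjoint (hT : IsIntegralOperator K T) (hK : IsSchurKernel μ K C)
    (h_symm : ∀ y z, K y z = starRingEnd ℂ (K z y)) : IsSelfAdjoint T := by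
  rw [ContinuousLinearMap.isSelfAdjoint_iff', eq_comm, ContinuousLinearMap.eq_adjoint_iff]
  intro u v
  rw [L2.inner_def, L2.inner_def]
  calc ∫ y, inner ℂ (T u y) (v y) ∂μ
      = ∫ y, ∫ z, starRingEnd ℂ (K y z * u z) * v y ∂μ ∂μ := by
        refine integral_congr_ae ?_
        filter_upwards [hT u] with y hy
        rw [hy, RCLike.inner_apply, integral_mul_const, integral_conj, mul_comm]
    _ = ∫ z, ∫ y, starRingEnd ℂ (K y z * u z) * v y ∂μ ∂μ :=
        integral_integral_swap (hK.integrable_conj_mul u v)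
    _ = ∫ z, inner ℂ (u z) (T v z) ∂μ := by
        refine integral_congr_ae ?_
        filter_upwards [hT v] with z hz
        rw [hz, RCLike.inner_apply, ← integral_mul_const]
        congr 1 with y
        rw [h_symm z y, map_mul]
        ring

end IntegralOperators

/-! ### Weyl quantization -/

section Quantization

open scoped NNReal

/-- The operator kernel with profile `G` in the midpoint and the `H`-scaled difference of its two
arguments. Weyl quantizations and their compositions have kernels of this form, with `H = 2πh`. -/
def midpointKernel (G : ℝ → ℝ → ℂ) (H y z : ℝ) : ℂ := (H : ℂ)⁻¹ * G ((y + z) / 2) ((y - z) / H)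

/-- `T` is the Weyl quantization of the complex-valued symbol `b` at parameter `H = 2πh`. -/
def IsQuantization (H : ℝ) (b : ℝ × ℝ → ℂ) (T : L2R →L[ℂ] L2R) : Prop :=
  IsIntegralOperator (midpointKernel (fiberFourier b) H) T

theorem isSchurKernel_of_enorm_le_cauchyPDF {K : ℝ → ℝ → ℂ}
    (hK : StronglyMeasurable (Function.uncurry K)) (C : ℝ≥0) {γ : ℝ≥0} (hγ : γ ≠ 0)
    (h_le : ∀ y z, ‖K y z‖ₑ ≤ C * ProbabilityTheory.cauchyPDF y γ z) :
    IsSchurKernel volume K C := by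
  have h_integral (y : ℝ) : ∫⁻ z, C * ProbabilityTheory.cauchyPDF y γ z = C := by
    rw [lintegral_const_mul' _ _ ENNReal.coe_ne_top,
      ProbabilityTheory.lintegral_cauchyPDF_eq_one _ hγ, mul_one]
  have h_symm (y z : ℝ) :
      ProbabilityTheory.cauchyPDF y γ z = ProbabilityTheory.cauchyPDF z γ y := by
    rw [ProbabilityTheory.cauchyPDF_def, ProbabilityTheory.cauchyPDF_def,
      ProbabilityTheory.cauchyPDFReal_def, ProbabilityTheory.cauchyPDFReal_def, sub_sq_comm]
  refine ⟨hK, fun y => ?_, fun z => ?_⟩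
  · exact (lintegral_mono (h_le y)).trans_eq (h_integral y)
  · refine (lintegral_mono fun y => ?_).trans_eq (h_integral z)
    rw [h_symm]
    exact h_le y z

theorem isSchurKernel_midpointKernel {G : ℝ → ℝ → ℂ} {H C : ℝ} (hH : 0 < H)
    (h_meas : StronglyMeasurable (Function.uncurry (midpointKernel G H)))
    (h_le : ∀ x t, (1 + t ^ 2) * ‖G x t‖ ≤ C) :
    IsSchurKernel volume (midpointKernel G H) (C * Real.pi).toNNReal := by
  have hC : 0 ≤ C := (by positivity : (0 : ℝ) ≤ _).trans (h_le 0 0)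
  have hγ : H.toNNReal ≠ 0 := (Real.toNNReal_pos.2 hH).ne'
  refine isSchurKernel_of_enorm_le_cauchyPDF h_meas _ hγ fun y z => ?_
  have h_bound := h_le ((y + z) / 2) ((y - z) / H)
  rw [mul_comm, ← le_div_iff₀ (by positivity)] at h_bound
  rw [ProbabilityTheory.cauchyPDF_def, ← ENNReal.ofReal, ← ENNReal.ofReal_mul (by positivity),
    ← ofReal_norm, ProbabilityTheory.cauchyPDFReal_def',
    NNReal.coe_inv, Real.coe_toNNReal H hH.le]
  refine ENNReal.ofReal_le_ofReal ?_
  calc ‖midpointKernel G H y z‖ ≤ H⁻¹ * (C / (1 + ((y - z) / H) ^ 2)) := by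
        rw [midpointKernel, norm_mul, norm_inv, norm_real, Real.norm_of_nonneg hH.le]
        gcongr
    _ = C * Real.pi * (Real.pi⁻¹ * H⁻¹ * (1 + ((z - y) / H) ^ 2)⁻¹) := by
        rw [div_pow, sub_sq_comm, ← div_pow]
        field_simp

theorem IsIntegralOperator.norm_le_mul_pi {G : ℝ → ℝ → ℂ} {H C : ℝ} {T : L2R →L[ℂ] L2R}
    (hT : IsIntegralOperator (midpointKernel G H) T) (hH : 0 < H)
    (h_meas : StronglyMeasurable (Function.uncurry (midpointKernel G H)))
    (h_le : ∀ x t, (1 + t ^ 2) * ‖G x t‖ ≤ C) : ‖T‖ ≤ C * Real.pi := by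
  have hC : 0 ≤ C := (by positivity : (0 : ℝ) ≤ _).trans (h_le 0 0)
  have h_norm := hT.norm_le (isSchurKernel_midpointKernel hH h_meas h_le)
  rwa [Real.coe_toNNReal _ (by positivity)] at h_norm

variable {b c χ : ℝ × ℝ → ℂ}

theorem IsTestSymbol.exists_isSchurKernel (hb : IsTestSymbol b) :
    ∃ C, ∀ v H, 0 < H →
      IsSchurKernel volume (midpointKernel (fiberFourier (translate b v)) H) C := by
  obtain ⟨C, -, h_le⟩ := hb.exists_pow_mul_norm_fiberFourier_le 1
  refine ⟨(C * Real.pi).toNNReal, fun v H hH => isSchurKernel_midpointKernel hH ?_ fun x t => ?_⟩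
  · exact (continuous_const.mul ((hb.translate v).continuous_fiberFourier (by fun_prop)
      (by fun_prop))).stronglyMeasurable
  · rw [norm_fiberFourier_translate]
    simpa only [pow_one] using h_le (x - v.1) t

theorem IsTestSymbol.isSchurKernel (hb : IsTestSymbol b) {H : ℝ} (hH : 0 < H) :
    ∃ C, IsSchurKernel volume (midpointKernel (fiberFourier b) H) C := by
  obtain ⟨C, hC⟩ := hb.exists_isSchurKernel
  exact ⟨C, by simpa only [translate_zero] using hC 0 H hH⟩

theorem midpointKernel_fiberFourier_conj (hb : ∀ p, starRingEnd ℂ (b p) = b p) (H y z : ℝ) :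
    midpointKernel (fiberFourier b) H y z =
      starRingEnd ℂ (midpointKernel (fiberFourier b) H z y) := by
  simp only [midpointKernel, fiberFourier_eq_integral]
  rw [map_mul, map_inv₀, conj_ofReal, ← integral_conj, add_comm]
  congr 2 with η
  rw [map_mul, hb, ← Complex.exp_conj, map_mul, conj_ofReal, conj_I, mul_neg, ← neg_mul,
    ← ofReal_neg, ← neg_sub z y]
  congr 4
  ring

theorem IsQuantization.isSelfAdjoint {H : ℝ} {T : L2R →L[ℂ] L2R} (hT : IsQuantization H b T)
    (hH : 0 < H) (hb : IsTestSymbol b) (h_real : ∀ p, starRingEnd ℂ (b p) = b p) :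
    IsSelfAdjoint T := by
  obtain ⟨C, hC⟩ := hb.isSchurKernel hH
  exact IsIntegralOperator.isSelfAdjoint hT hC (midpointKernel_fiberFourier_conj h_real H)

theorem integral_midpointKernel_mul_midpointKernel (b c : ℝ × ℝ → ℂ) {H : ℝ} (hH : 0 < H)
    (y z : ℝ) :
    ∫ w, midpointKernel (fiberFourier b) H y w * midpointKernel (fiberFourier c) H w z =
      midpointKernel (moyalFourier b c H) H y z := by
  have hH' : (H : ℂ) ≠ 0 := by exact_mod_cast hH.ne'
  have h_pointwise (s : ℝ) : midpointKernel (fiberFourier b) H y (H * s + z) *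
        midpointKernel (fiberFourier c) H (H * s + z) z =
      (H : ℂ)⁻¹ * (H : ℂ)⁻¹ * moyalIntegrand b c H ((y + z) / 2) ((y - z) / H) s := by
    unfold midpointKernel moyalIntegrand
    rw [show (y + (H * s + z)) / 2 = (y + z) / 2 + H * s / 2 by ring,
      show (y - (H * s + z)) / H = (y - z) / H - s by field_simp; ring,
      show (H * s + z + z) / 2 = (y + z) / 2 - H * ((y - z) / H - s) / 2 by field_simp; ring,
      show (H * s + z - z) / H = s by field_simp; ring]
    ring
  have h_subst := Measure.integral_comp_mul_left (fun w =>
    midpointKernel (fiberFourier b) H y (w + z) * midpointKernel (fiberFourier c) H (w + z) z) H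
  rw [integral_add_right_eq_self (fun w =>
    midpointKernel (fiberFourier b) H y w * midpointKernel (fiberFourier c) H w z) z] at h_subst
  simp only [h_pointwise] at h_subst
  rw [integral_const_mul, abs_of_pos (inv_pos.2 hH), Complex.real_smul, ofReal_inv,
    mul_assoc] at h_subst
  exact (mul_left_cancel₀ (inv_ne_zero hH') h_subst).symm

section Products

variable {H m : ℝ} {S T : L2R →L[ℂ] L2R}

theorem IsQuantization.isIntegralOperator_mul (hS : IsQuantization H b S)
    (hT : IsQuantization H c T) (hH : 0 < H) (hb : IsTestSymbol b) (hc : IsTestSymbol c) :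
    IsIntegralOperator (midpointKernel (moyalFourier b c H) H) (S * T) ∧
      ∃ C, IsSchurKernel volume (midpointKernel (moyalFourier b c H) H) C := by
  obtain ⟨C₁, hC₁⟩ := hb.isSchurKernel hH
  obtain ⟨C₂, hC₂⟩ := hc.isSchurKernel hH
  have h_op := IsIntegralOperator.comp hS hT hC₁ hC₂
  have h_schur := hC₁.comp hC₂
  simp only [integral_midpointKernel_mul_midpointKernel b c hH] at h_op h_schur
  exact ⟨h_op, _, h_schur⟩

theorem IsQuantization.norm_mul_le (hS : IsQuantization H b S) (hT : IsQuantization H c T)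
    (hH : 0 < H) (hb : IsTestSymbol b) (hc : IsTestSymbol c)
    (h_le : ∀ x t, (1 + t ^ 2) * ‖moyalFourier b c H x t‖ ≤ m) : ‖S * T‖ ≤ m * Real.pi := by
  obtain ⟨h_op, C, hC⟩ := hS.isIntegralOperator_mul hT hH hb hc
  exact h_op.norm_le_mul_pi hH hC.stronglyMeasurable h_le

theorem IsQuantization.norm_mul_sub_le (hS : IsQuantization H b S) (hT : IsQuantization H c T)
    (hH : 0 < H) (hb : IsTestSymbol b) (hc : IsTestSymbol c)
    (h_le : ∀ x t, (1 + t ^ 2) * ‖moyalFourier b c H x t - fiberFourier c x t‖ ≤ m) :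
    ‖S * T - T‖ ≤ m * Real.pi := by
  obtain ⟨h_op, C, hC⟩ := hS.isIntegralOperator_mul hT hH hb hc
  obtain ⟨C', hC'⟩ := hc.isSchurKernel hH
  have h_sub := h_op.sub hT hC hC'
  have h_meas := hC.stronglyMeasurable.sub hC'.stronglyMeasurable
  have h_kernel (y z : ℝ) : midpointKernel (moyalFourier b c H) H y z -
      midpointKernel (fiberFourier c) H y z =
        midpointKernel (moyalFourier b c H - fiberFourier c) H y z :=
    (mul_sub _ _ _).symm
  simp only [h_kernel] at h_sub
  refine h_sub.norm_le_mul_pi hH ?_ h_le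
  convert h_meas using 1
  exact funext fun p => (h_kernel p.1 p.2).symm

end Products

theorem IsTestSymbol.exists_phaseWeight_mul_norm_mul_le (hb : IsTestSymbol b)
    (hc : IsTestSymbol c) {H₀ : ℝ} (h_pos : 0 ≤ H₀) (p : ℕ) :
    ∃ C, 0 ≤ C ∧ ∀ u v H S T, 0 < H → H ≤ H₀ → IsQuantization H (translate b u) S →
      IsQuantization H (translate c v) T → phaseWeight (u - v) ^ p * ‖S * T‖ ≤ C := by
  obtain ⟨C, hC, h_le⟩ := hb.exists_phaseWeight_mul_norm_moyalFourier_le hc h_pos p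
  refine ⟨C * Real.pi, by positivity, fun u v H S T hH hH₀ hS hT => ?_⟩
  have h_weight : 0 < phaseWeight (u - v) := by unfold phaseWeight; positivity
  have h_norm := hS.norm_mul_le hT hH (hb.translate u) (hc.translate v)
    (m := C / phaseWeight (u - v) ^ p) fun x t => by
      rw [le_div_iff₀' (by positivity)]
      exact h_le u v H x t hH.le hH₀
  rwa [div_mul_eq_mul_div, le_div_iff₀' (by positivity)] at h_norm

theorem IsTestSymbol.exists_norm_mul_le_of_disjoint (hb : IsTestSymbol b) (hc : IsTestSymbol c)
    (N : ℕ) : ∃ C, 0 ≤ C ∧ ∀ u v H S T, 0 < H →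
      Disjoint (tsupport (translate b u)) (tsupport (translate c v)) →
      IsQuantization H (translate b u) S → IsQuantization H (translate c v) T →
      ‖S * T‖ ≤ C * H ^ N := by
  obtain ⟨C, hC, h_le⟩ := hb.exists_norm_moyalFourier_le_of_disjoint hc N
  refine ⟨C * Real.pi, by positivity, fun u v H S T hH h_disj hS hT => ?_⟩
  rw [mul_right_comm]
  exact hS.norm_mul_le hT hH (hb.translate u) (hc.translate v) fun x t =>
    h_le u v h_disj H x t hH.le

theorem IsTestSymbol.exists_norm_mul_sub_le (hχ : IsTestSymbol χ) (hb : IsTestSymbol b)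
    (h_one : Disjoint (tsupport (χ - 1)) (tsupport b)) (N : ℕ) :
    ∃ C, 0 ≤ C ∧ ∀ u H S T, 0 < H → IsQuantization H (translate χ u) S →
      IsQuantization H (translate b u) T → ‖S * T - T‖ ≤ C * H ^ (N + 1) := by
  obtain ⟨C, hC, h_le⟩ := hχ.exists_norm_moyalFourier_sub_le_of_disjoint hb h_one N
  refine ⟨C * Real.pi, by positivity, fun u H S T hH hS hT => ?_⟩
  rw [mul_right_comm]
  exact hS.norm_mul_sub_le hT hH (hχ.translate u) (hb.translate u) fun x t =>
    h_le u H x t hH.le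

end Quantization

section Lattice

/-! ### Lattice families of quantizations -/

/-- The lattice vector `j ∈ ℤ²` as a phase space vector. -/
def latticeVector (j : ℤ × ℤ) : ℝ × ℝ := (j.1, j.2)

/-- The weight by which the interaction of the quantizations at the lattice sites `j` and `k` is
measured. -/
def latticeWeight (j k : ℤ × ℤ) : ℝ := (phaseWeight (latticeVector (j - k)))⁻¹

theorem latticeVector_sub (j k : ℤ × ℤ) :
    latticeVector (j - k) = latticeVector j - latticeVector k := by
  simp only [latticeVector, Prod.fst_sub, Prod.snd_sub, Int.cast_sub, Prod.mk_sub_mk]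

theorem one_le_phaseWeight (v : ℝ × ℝ) : 1 ≤ phaseWeight v :=
  one_le_mul_of_one_le_of_one_le (le_add_of_nonneg_right (sq_nonneg _))
    (le_add_of_nonneg_right (sq_nonneg _))

theorem latticeWeight_nonneg (j k : ℤ × ℤ) : 0 ≤ latticeWeight j k :=
  inv_nonneg.2 (zero_le_one.trans (one_le_phaseWeight _))

theorem latticeWeight_le_one (j k : ℤ × ℤ) : latticeWeight j k ≤ 1 :=
  inv_le_one_of_one_le₀ (one_le_phaseWeight _)

theorem latticeWeight_self (j : ℤ × ℤ) : latticeWeight j j = 1 := by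
  simp [latticeWeight, latticeVector, phaseWeight]

theorem summable_inv_one_add_int_sq : Summable fun n : ℤ => (1 + (n : ℝ) ^ 2)⁻¹ := by
  refine .of_norm_bounded_eventually (Real.summable_one_div_int_pow.2 one_lt_two) ?_
  filter_upwards [(Set.finite_singleton (0 : ℤ)).compl_mem_cofinite] with n hn
  have h_pos : 0 < (n : ℝ) ^ 2 := sq_pos_of_ne_zero (Int.cast_ne_zero.2 hn)
  rw [Real.norm_of_nonneg (by positivity), one_div]
  exact inv_anti₀ h_pos (le_add_of_nonneg_left zero_le_one)

theorem summable_inv_phaseWeight_latticeVector :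
    Summable fun j : ℤ × ℤ => (phaseWeight (latticeVector j))⁻¹ := by
  simp only [phaseWeight, latticeVector, mul_inv]
  exact summable_inv_one_add_int_sq.mul_of_nonneg summable_inv_one_add_int_sq
    (fun n => by positivity) (fun n => by positivity)

theorem isInteractionWeight_latticeWeight (Λ : Finset (ℤ × ℤ)) :
    IsInteractionWeight (fun j k : Λ => latticeWeight j k)
      (∑' j : ℤ × ℤ, (phaseWeight (latticeVector j))⁻¹) where
  pos j k := inv_pos.2 (zero_lt_one.trans_le (one_le_phaseWeight _))
  le_one j k := latticeWeight_le_one j k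
  self j := latticeWeight_self j
  symm j k := by
    simp only [latticeWeight, phaseWeight, latticeVector_sub, Prod.fst_sub, Prod.snd_sub,
      sub_sq_comm]
  sum_le j := by
    rw [Finset.sum_coe_sort Λ (latticeWeight j)]
    have h_image := Finset.sum_image (s := Λ) (g := fun k => (j : ℤ × ℤ) - k)
      (f := fun l => (phaseWeight (latticeVector l))⁻¹) (sub_right_injective.injOn)
    exact h_image.symm.trans_le (summable_inv_phaseWeight_latticeVector.sum_le_tsum _ fun l _ =>
      inv_nonneg.2 (zero_le_one.trans (one_le_phaseWeight _)))

variable {b c χ : ℝ × ℝ → ℂ}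

theorem IsTestSymbol.exists_norm_mul_le_latticeWeight (hb : IsTestSymbol b) (hc : IsTestSymbol c)
    (p : ℕ) : ∃ C, 0 ≤ C ∧ ∀ h j k S T, 0 < h → h ≤ 1 →
      IsQuantization (2 * Real.pi * h) (translate b (latticeVector j)) S →
      IsQuantization (2 * Real.pi * h) (translate c (latticeVector k)) T →
      ‖S * T‖ ≤ C * latticeWeight j k ^ p := by
  obtain ⟨C, hC, h_le⟩ :=
    hb.exists_phaseWeight_mul_norm_mul_le hc (H₀ := 2 * Real.pi) (by positivity) p
  refine ⟨C, hC, fun h j k S T h_pos h_le_one hS hT => ?_⟩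
  have h_weight : 0 < phaseWeight (latticeVector (j - k)) :=
    zero_lt_one.trans_le (one_le_phaseWeight _)
  rw [latticeWeight, inv_pow, ← div_eq_mul_inv, le_div_iff₀' (by positivity), latticeVector_sub]
  exact h_le _ _ _ S T (by positivity) (mul_le_of_le_one_right (by positivity) h_le_one) hS hT

/-- `T` is the family of Weyl quantizations at parameter `h` of the translates of `b` by the
lattice vectors in `Λ`. -/
def IsLatticeQuantization {Λ : Finset (ℤ × ℤ)} (h : ℝ) (b : ℝ × ℝ → ℂ)
    (T : Λ → L2R →L[ℂ] L2R) : Prop :=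
  ∀ j : Λ, IsQuantization (2 * Real.pi * h) (translate b (latticeVector j)) (T j)

theorem IsTestSymbol.exists_norm_localizationDefect_le (hχ : IsTestSymbol χ) (hb : IsTestSymbol b)
    (h_one : Disjoint (tsupport (χ - 1)) (tsupport b))
    (h_disj : ∀ j k, j ≠ k → Disjoint (tsupport (translate χ (latticeVector j)))
      (tsupport (translate b (latticeVector k)))) (n : ℕ) :
    ∃ C, 0 ≤ C ∧ ∀ (Λ : Finset (ℤ × ℤ)) (h : ℝ) (P T : Λ → L2R →L[ℂ] L2R), 0 < h → h ≤ 1 →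
      IsLatticeQuantization h χ P → IsLatticeQuantization h b T →
      ∀ j k, ‖localizationDefect P T j k‖ ≤ C * (h ^ n) ^ 4 * latticeWeight j k ^ 4 := by
  obtain ⟨C₁, hC₁, h_decay⟩ := hχ.exists_norm_mul_le_latticeWeight hb 8
  obtain ⟨C₂, hC₂, h_off⟩ := hχ.exists_norm_mul_le_of_disjoint hb (n * 8)
  obtain ⟨C₃, hC₃, h_diag⟩ := hχ.exists_norm_mul_sub_le hb h_one (n * 4)
  set C := C₁ + C₂ * (2 * Real.pi) ^ (n * 8) + C₃ * (2 * Real.pi) ^ (n * 4 + 1)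
  have h₁ : 0 ≤ C₂ * (2 * Real.pi) ^ (n * 8) := by positivity
  have h₂ : 0 ≤ C₃ * (2 * Real.pi) ^ (n * 4 + 1) := by positivity
  have hC_nonneg : 0 ≤ C := by positivity
  refine ⟨C, hC_nonneg, fun Λ h P T h_pos h_le_one hP hT j k => ?_⟩
  have hH : 0 < 2 * Real.pi * h := by positivity
  have h_weight : 0 ≤ latticeWeight j k := latticeWeight_nonneg _ _
  rcases eq_or_ne j k with rfl | hjk
  · rw [localizationDefect, if_pos rfl, latticeWeight_self, one_pow, mul_one]
    calc ‖P j * T j - T j‖ ≤ C₃ * (2 * Real.pi * h) ^ (n * 4 + 1) :=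
          h_diag _ _ _ _ hH (hP j) (hT j)
      _ = C₃ * (2 * Real.pi) ^ (n * 4 + 1) * (h ^ n) ^ 4 * h := by ring
      _ ≤ C₃ * (2 * Real.pi) ^ (n * 4 + 1) * (h ^ n) ^ 4 :=
          mul_le_of_le_one_right (by positivity) h_le_one
      _ ≤ C * (h ^ n) ^ 4 := by gcongr; linarith
  · rw [localizationDefect, if_neg hjk, sub_zero]
    have h_far : ‖P j * T k‖ ≤ C * latticeWeight j k ^ 8 :=
      (h_decay h j k _ _ h_pos h_le_one (hP j) (hT k)).trans (by gcongr; linarith)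
    have h_small : ‖P j * T k‖ ≤ C * (h ^ n) ^ 8 :=
      calc ‖P j * T k‖ ≤ C₂ * (2 * Real.pi * h) ^ (n * 8) :=
            h_off _ _ _ _ _ hH (h_disj j k (Subtype.coe_ne_coe.2 hjk)) (hP j) (hT k)
        _ = C₂ * (2 * Real.pi) ^ (n * 8) * (h ^ n) ^ 8 := by ring
        _ ≤ C * (h ^ n) ^ 8 := by gcongr; linarith
    exact le_of_le_of_le_of_mul_eq_sq (norm_nonneg _) (by positivity) h_far h_small (by ring)

theorem IsTestSymbol.exists_almostLocalizes (hχ : IsTestSymbol χ) (hb : IsTestSymbol b)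
    (hχ_real : ∀ p, starRingEnd ℂ (χ p) = χ p) (hb_real : ∀ p, starRingEnd ℂ (b p) = b p)
    (h_one : Disjoint (tsupport (χ - 1)) (tsupport b))
    (h_disj : ∀ j k, j ≠ k → Disjoint (tsupport (translate χ (latticeVector j)))
      (tsupport (translate b (latticeVector k)))) (n : ℕ) :
    ∃ K, 1 ≤ K ∧ ∀ (Λ : Finset (ℤ × ℤ)) (h : ℝ) (P T : Λ → L2R →L[ℂ] L2R), 0 < h → h ≤ 1 →
      IsLatticeQuantization h χ P → IsLatticeQuantization h b T →
      AlmostLocalizes (fun j k : Λ => latticeWeight j k) P T K (h ^ n) := by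
  obtain ⟨C₁, hC₁, h_left⟩ := hχ.exists_norm_mul_le_latticeWeight hχ 4
  obtain ⟨C₂, hC₂, h_mixed⟩ := hχ.exists_norm_mul_le_latticeWeight hb 4
  obtain ⟨C₃, hC₃, h_right⟩ := hb.exists_norm_mul_le_latticeWeight hb 4
  obtain ⟨C₄, hC₄, h_defect⟩ := hχ.exists_norm_localizationDefect_le hb h_one h_disj n
  set K := 1 + C₁ + C₂ + C₃ + C₄
  refine ⟨K, by linarith, fun Λ h P T h_pos h_le_one hP hT => ?_⟩
  have hH : 0 < 2 * Real.pi * h := by positivity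
  have h_weaken {C x : ℝ} {j k : Λ} (hC : C ≤ K) (hx : x ≤ C * latticeWeight j k ^ 4) :
      x ≤ K * latticeWeight j k ^ 4 :=
    hx.trans (mul_le_mul_of_nonneg_right hC (pow_nonneg (latticeWeight_nonneg _ _) 4))
  refine ⟨by linarith, by positivity, pow_le_one₀ h_pos.le h_le_one,
    fun j => (hP j).isSelfAdjoint hH (hχ.translate _) fun p => hχ_real _,
    fun j => (hT j).isSelfAdjoint hH (hb.translate _) fun p => hb_real _,
    fun j k => ?_, fun j k => ?_, fun j k => ?_, fun j k => ?_⟩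
  · exact h_weaken (by linarith) (h_left h j k _ _ h_pos h_le_one (hP j) (hP k))
  · exact h_weaken (by linarith) (h_mixed h j k _ _ h_pos h_le_one (hP j) (hT k))
  · exact h_weaken (by linarith) (h_right h j k _ _ h_pos h_le_one (hT j) (hT k))
  · refine (h_defect Λ h P T h_pos h_le_one hP hT j k).trans ?_
    have := latticeWeight_nonneg j k
    gcongr
    linarith

end Lattice

section RealSymbols

/-! ### Real-valued symbols -/

theorem isTestSymbol_ofReal_comp {a : ℝ × ℝ → ℝ} (ha : ContDiff ℝ (⊤ : ℕ∞) a)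
    (ha_supp : HasCompactSupport a) : IsTestSymbol (Complex.ofReal ∘ a) :=
  ⟨ofRealCLM.contDiff.comp ha, ha_supp.comp_left ofReal_zero⟩

theorem tsupport_ofReal_comp (a : ℝ × ℝ → ℝ) : tsupport (Complex.ofReal ∘ a) = tsupport a :=
  tsupport_comp_eq ofReal_eq_zero a

theorem disjoint_tsupport_ofReal_comp_sub_one {a χ : ℝ × ℝ → ℝ} {U : Set (ℝ × ℝ)}
    (hU : IsOpen U) (haU : tsupport a ⊆ U) (hχ : ∀ p ∈ U, χ p = 1) :
    Disjoint (tsupport (Complex.ofReal ∘ χ - 1)) (tsupport (Complex.ofReal ∘ a)) := by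
  have h_support : Function.support (Complex.ofReal ∘ χ - 1) ⊆ Uᶜ := fun p hp hpU =>
    hp (by simp [hχ p hpU])
  rw [tsupport_ofReal_comp]
  exact (Set.disjoint_compl_left_iff_subset.2 haU).mono_left
    (closure_minimal h_support hU.isClosed_compl)

theorem weylKernel_eq_midpointKernel {h : ℝ} (h_pos : 0 < h) (a : ℝ × ℝ → ℝ) (y z : ℝ) :
    weylKernel h a y z =
      midpointKernel (fiberFourier (Complex.ofReal ∘ a)) (2 * Real.pi * h) y z := by
  rw [weylKernel, midpointKernel, fiberFourier_eq_integral, one_div, ofReal_inv]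
  congr 2 with η
  rw [mul_comm I, Function.comp_apply]
  congr 4
  field_simp

theorem isQuantization_of_isWeylQuant {h : ℝ} {a : ℝ × ℝ → ℝ} {T : L2R →L[ℂ] L2R}
    (hT : IsWeylQuant h a T) (h_pos : 0 < h) :
    IsQuantization (2 * Real.pi * h) (Complex.ofReal ∘ a) T := by
  simp only [IsWeylQuant, weylKernel_eq_midpointKernel h_pos] at hT
  exact hT

theorem shiftSymbol_eq (a : ℝ × ℝ → ℝ) (j : ℤ × ℤ) :
    shiftSymbol a j = a ∘ Homeomorph.subRight (latticeVector j) := rfl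

theorem mem_tsupport_shiftSymbol {a : ℝ × ℝ → ℝ} {j : ℤ × ℤ} {p : ℝ × ℝ} :
    p ∈ tsupport (shiftSymbol a j) ↔ p - latticeVector j ∈ tsupport a := by
  rw [shiftSymbol_eq, tsupport_comp_eq_preimage]
  rfl

theorem disjoint_tsupport_translate_of_shiftSymbol {a χ : ℝ × ℝ → ℝ}
    (h_disj : ∀ j : ℤ × ℤ, j ≠ 0 → Disjoint (tsupport (shiftSymbol χ j)) (tsupport a))
    {j k : ℤ × ℤ} (hjk : j ≠ k) :
    Disjoint (tsupport (translate (Complex.ofReal ∘ χ) (latticeVector j)))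
      (tsupport (translate (Complex.ofReal ∘ a) (latticeVector k))) := by
  simp only [tsupport_translate, tsupport_ofReal_comp]
  refine Set.disjoint_left.2 fun p hχ ha => ?_
  refine Set.disjoint_left.1 (h_disj (j - k) (sub_ne_zero.2 hjk)) ?_ ha
  rwa [mem_tsupport_shiftSymbol, latticeVector_sub, sub_sub_sub_cancel_right]

theorem disjoint_tsupport_shiftSymbol_of_subset_unitCell {a χ : ℝ × ℝ → ℝ}
    (ha : tsupport a ⊆ Set.Ioo (-(1 / 2) : ℝ) (1 / 2) ×ˢ Set.Ioo (-(1 / 2) : ℝ) (1 / 2))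
    (hχ : tsupport χ ⊆ Set.Ioo (-(1 / 2) : ℝ) (1 / 2) ×ˢ Set.Ioo (-(1 / 2) : ℝ) (1 / 2))
    {j : ℤ × ℤ} (hj : j ≠ 0) : Disjoint (tsupport (shiftSymbol χ j)) (tsupport a) := by
  have h_zero {m : ℤ} {x : ℝ} (hx : x ∈ Set.Ioo (-(1 / 2) : ℝ) (1 / 2))
      (hxm : x - m ∈ Set.Ioo (-(1 / 2) : ℝ) (1 / 2)) : m = 0 := by
    have h_abs : |(m : ℝ)| < 1 := abs_lt.2 ⟨by linarith [hx.1, hxm.2], by linarith [hx.2, hxm.1]⟩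
    exact Int.abs_lt_one_iff.1 (by exact_mod_cast h_abs)
  refine Set.disjoint_left.2 fun p hpχ hpa => hj ?_
  have h_shift := hχ (mem_tsupport_shiftSymbol.1 hpχ)
  exact Prod.ext (h_zero (ha hpa).1 h_shift.1) (h_zero (ha hpa).2 h_shift.2)

end RealSymbols

end WeylCalculus

open WeylCalculus in
theorem weyl_single_site_localization_general {a χ : ℝ × ℝ → ℝ}
    (ha_smooth : ContDiff ℝ (⊤ : ℕ∞) a) (ha_supp : HasCompactSupport a)
    (hχ_smooth : ContDiff ℝ (⊤ : ℕ∞) χ) (hχ_supp : HasCompactSupport χ)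
    (h_disj : ∀ j : ℤ × ℤ, j ≠ 0 → Disjoint (tsupport (shiftSymbol χ j)) (tsupport a))
    (hχ_one : ∃ U : Set (ℝ × ℝ), IsOpen U ∧ tsupport a ⊆ U ∧ ∀ p ∈ U, χ p = 1) (N : ℝ) :
    ∃ C : ℝ, 0 < C ∧ ∀ h : ℝ, 0 < h → h ≤ 1 →
      ∀ (Λ : Finset (ℤ × ℤ)) (T P : ℤ × ℤ → (L2R →L[ℂ] L2R)),
        (∀ j ∈ Λ, IsWeylQuant h (shiftSymbol a j) (T j)) →
        (∀ j ∈ Λ, IsWeylQuant h (shiftSymbol χ j) (P j)) →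
        (∀ j ∈ Λ, ‖P j * ∑ k ∈ Λ, T k - T j‖ ≤ C * h ^ N) ∧
          ‖(1 - ∑ k ∈ Λ, P k) * ∑ k ∈ Λ, T k‖ ≤ C * h ^ N := by
  obtain ⟨U, hU, haU, hχU⟩ := hχ_one
  obtain ⟨n, hn⟩ := exists_nat_ge N
  obtain ⟨K, hK, h_localizes⟩ := (isTestSymbol_ofReal_comp hχ_smooth hχ_supp).exists_almostLocalizes
    (isTestSymbol_ofReal_comp ha_smooth ha_supp) (fun p => conj_ofReal _) (fun p => conj_ofReal _)
    (disjoint_tsupport_ofReal_comp_sub_one hU haU hχU)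
    (fun j k => disjoint_tsupport_translate_of_shiftSymbol h_disj) n
  set Z := ∑' j : ℤ × ℤ, (phaseWeight (latticeVector j))⁻¹
  refine ⟨max (K * Z) (√(4 * K ^ 3) * Z ^ 2) + 1, by positivity,
    fun h h_pos h_le_one Λ T P hT hP => ?_⟩
  have h_pow : h ^ n ≤ h ^ N := by
    rw [← Real.rpow_natCast]
    exact Real.rpow_le_rpow_of_exponent_ge h_pos h_le_one hn
  have h_family : AlmostLocalizes _ (fun j : Λ => P j) (fun j : Λ => T j) K (h ^ n) :=
    h_localizes Λ h _ _ h_pos h_le_one (fun j => isQuantization_of_isWeylQuant (hP j j.2) h_pos)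
      fun j => isQuantization_of_isWeylQuant (hT j j.2) h_pos
  have hω := isInteractionWeight_latticeWeight Λ
  rw [← Finset.sum_coe_sort Λ T, ← Finset.sum_coe_sort Λ P]
  refine ⟨fun j hj => (h_family.norm_mul_sum_sub_le hω ⟨j, hj⟩).trans ?_,
    (h_family.norm_one_sub_sum_mul_sum_le hω).trans ?_⟩
  · gcongr
    exact le_add_of_le_of_nonneg (le_max_left _ _) zero_le_one
  · gcongr
    exact le_add_of_le_of_nonneg (le_max_right _ _) zero_le_one

theorem weyl_single_site_localization
    (a₀ χ₀ : ℝ × ℝ → ℝ)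
    (ha_smooth : ContDiff ℝ (⊤ : ℕ∞) a₀) (ha_supp : HasCompactSupport a₀)
    (ha_supp' : tsupport a₀ ⊆
      Set.Ioo (-(1/2) : ℝ) (1/2) ×ˢ Set.Ioo (-(1/2) : ℝ) (1/2))
    (hχ_smooth : ContDiff ℝ (⊤ : ℕ∞) χ₀) (hχ_supp : HasCompactSupport χ₀)
    (hχ_supp' : tsupport χ₀ ⊆
      Set.Ioo (-(1/2) : ℝ) (1/2) ×ˢ Set.Ioo (-(1/2) : ℝ) (1/2))
    (hχ_one : ∃ U : Set (ℝ × ℝ), IsOpen U ∧ tsupport a₀ ⊆ U ∧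
      ∀ p ∈ U, χ₀ p = 1) :
    ∀ N : ℝ, 0 < N → ∃ C : ℝ, 0 < C ∧
      ∀ h : ℝ, 0 < h → h < 1 →
        ∀ (Λ : Finset (ℤ × ℤ)) (T P : ℤ × ℤ → (L2R →L[ℂ] L2R)),
          (∀ j : ℤ × ℤ, IsWeylQuant h (shiftSymbol a₀ j) (T j)) →
          (∀ j : ℤ × ℤ, IsWeylQuant h (shiftSymbol χ₀ j) (P j)) →
          ∀ j ∈ Λ,
            ‖(P j).comp (∑ k ∈ Λ, T k) - T j‖ ≤ C * h ^ N ∧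
            ‖((1 : L2R →L[ℂ] L2R) - ∑ k ∈ Λ, P k).comp (∑ k ∈ Λ, T k)‖
              ≤ C * h ^ N := by
  intro N _
  obtain ⟨C, hC, h_le⟩ := weyl_single_site_localization_general ha_smooth ha_supp hχ_smooth hχ_supp
    (fun j => WeylCalculus.disjoint_tsupport_shiftSymbol_of_subset_unitCell ha_supp' hχ_supp')
    hχ_one N
  refine ⟨C, hC, fun h h_pos h_lt Λ T P hT hP j hj => ?_⟩
  have h_bounds := h_le h h_pos h_lt.le Λ T P (fun j _ => hT j) fun j _ => hP j
  exact ⟨h_bounds.1 j hj, h_bounds.2⟩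
end
end
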